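/- Let E ⊆ ℕ have positive upper Banach density, i.e. there exist δ > 0 and intervals [M_j, N_j] with N_j − M_j → ∞ such that |E ∩ [M_j, N_j]| ≥ δ·(N_j − M_j) for all j. Then for every k ∈ ℕ and every ε > 0, for all sufficiently large N ∈ ℕ there exist an integer n with N − N^{1/2+ε} ≤ n ≤ N and a ∈ ℕ such that {a, a+⌊n^{3/2}⌋, a+⌊(n+1)^{3/2}⌋, …, a+⌊(n+k)^{3/2}⌋} ⊆ E. -/

import Mathlib

open Filter Finset MeasureTheory

/-- Discrete derivative: `Δg(n) = g(n) - g(n-1)` for `n ≥ 2`, and `Δg(1) = g(1)`. -/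
noncomputable def dd (g : ℕ → ℝ) (n : ℕ) : ℝ := if n = 1 then g 1 else g n - g (n - 1)

/-- Iterated discrete derivative `Δ^k`. -/
noncomputable def ddIter (f : ℕ → ℝ) : ℕ → ℕ → ℝ
  | 0 => f
  | k + 1 => dd (ddIter f k)

/-- `N`-th `W`-weighted average `𝔼^W_{n ≤ N} x_n`. -/
noncomputable def wavg {Y : Type*} [AddCommGroup Y] [Module ℝ Y]
    (W : ℕ → ℝ) (x : ℕ → Y) (N : ℕ) : Y :=
  (W N)⁻¹ • ∑ n ∈ Finset.Icc 1 N, dd W n • x n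

/-- `W`-weighted average over the interval `[M, N]`. -/
noncomputable def wavgI {Y : Type*} [AddCommGroup Y] [Module ℝ Y]
    (W : ℕ → ℝ) (x : ℕ → Y) (M N : ℕ) : Y :=
  (W N - W M)⁻¹ • ∑ n ∈ Finset.Icc M N, dd W n • x n

/-- Cesàro average over the interval `[M, N]`. -/
noncomputable def cesaroI {Y : Type*} [AddCommGroup Y] [Module ℝ Y]
    (x : ℕ → Y) (M N : ℕ) : Y :=
  ((N : ℝ) - (M : ℝ))⁻¹ • ∑ n ∈ Finset.Icc M N, x n

/-- Iterated `W`-weighted averages: `iterAvg W x k N = 𝔼(k)^W_{n ≤ N} x_n`,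
with the convention `iterAvg W x 0 = x`. -/
noncomputable def iterAvg {Y : Type*} [AddCommGroup Y] [Module ℝ Y]
    (W : ℕ → ℝ) (x : ℕ → Y) : ℕ → ℕ → Y
  | 0, N => x N
  | k + 1, N => (W N)⁻¹ • ∑ n ∈ Finset.Icc 1 N, dd W n • iterAvg W x k n

/-- The uniform `W`-weighted average of `x` equals `L`: `𝔼^W_unif x_n = L`. -/
def unifAvg {Y : Type*} [NormedAddCommGroup Y] [NormedSpace ℝ Y]
    (W : ℕ → ℝ) (x : ℕ → Y) (L : Y) : Prop :=
  ∀ ε > (0 : ℝ), ∃ K > (0 : ℝ), ∀ M N : ℕ, 1 ≤ M → M ≤ N → K ≤ W N - W M →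
    ‖wavgI W x M N - L‖ < ε

/-- `𝔼(∞)^W x_n = L`: `lim_{k → ∞} limsup_{N → ∞} ‖𝔼(k)^W_{n ≤ N}(x_n - L)‖ = 0`. -/
def iterInfty {Y : Type*} [NormedAddCommGroup Y] [NormedSpace ℝ Y]
    (W : ℕ → ℝ) (x : ℕ → Y) (L : Y) : Prop :=
  Tendsto (fun k => Filter.limsup (fun N => ‖iterAvg W (fun n => x n - L) (k + 1) N‖) atTop)
    atTop (nhds 0)

/-- Membership in the class `𝓕₁`. -/
def inF1 (f : ℕ → ℝ) : Prop :=
  Tendsto f atTop atTop ∧ Tendsto (fun n => dd f n) atTop (nhds 0) ∧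
    ∃ n₀ : ℕ, ∀ m n : ℕ, n₀ ≤ m → m ≤ n → dd f n ≤ dd f m

/-- `memF ℓ f` means `f ∈ 𝓕_{ℓ+1}`. -/
def memF : ℕ → (ℕ → ℝ) → Prop
  | 0, f => inF1 f
  | ℓ + 1, f => memF ℓ (dd f)

/-- Integer powers `T^m` of an invertible map `T` with inverse `e`. -/
def zpowIter {X : Type*} (T e : X → X) (m : ℤ) : X → X :=
  if 0 ≤ m then T^[m.toNat] else e^[(-m).toNat]

/-- `p(Δ)f(n)` for an integer polynomial `p`. -/
noncomputable def polyDD (p : Polynomial ℤ) (f : ℕ → ℝ) (n : ℕ) : ℝ :=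
  ∑ j ∈ Finset.range (p.natDegree + 1), (p.coeff j : ℝ) * ddIter f j n

/-- `E ⊆ ℕ = {1, 2, ...}` has positive upper Banach density. -/
def posUBD (E : Set ℕ) : Prop :=
  ∃ δ : ℝ, 0 < δ ∧ ∃ M N : ℕ → ℕ, (∀ j, 1 ≤ M j ∧ M j ≤ N j) ∧
    Tendsto (fun j => N j - M j) atTop atTop ∧
    ∀ j, δ * ((N j : ℝ) - (M j : ℝ)) ≤ (Nat.card ↥(E ∩ Set.Icc (M j) (N j)) : ℝ)

section
namespace S14

/-- uniform average over a finite type -/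
noncomputable def av {X : Type*} [Finite X] (f : X → ℝ) : ℝ :=
  letI := Fintype.ofFinite X
  (∑ x, f x) / (Nat.card X : ℝ)

open Classical in
/-- indicator of a proposition -/
noncomputable def ind (p : Prop) : ℝ := if p then 1 else 0

lemma ind_true {p : Prop} (h : p) : ind p = 1 := by simp [ind, h]
lemma ind_false {p : Prop} (h : ¬ p) : ind p = 0 := by simp [ind, h]
lemma ind_nonneg (p : Prop) : 0 ≤ ind p := by unfold ind; split_ifs <;> norm_num
lemma ind_le_one (p : Prop) : ind p ≤ 1 := by unfold ind; split_ifs <;> norm_num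
lemma ind_mono {p q : Prop} (h : p → q) : ind p ≤ ind q := by
  by_cases hp : p
  · rw [ind_true hp, ind_true (h hp)]
  · rw [ind_false hp]; exact ind_nonneg q

lemma av_eq {X : Type*} [Fintype X] (f : X → ℝ) : av f = (∑ x, f x) / (Fintype.card X : ℝ) := by
  unfold av
  rw [Nat.card_eq_fintype_card]
  congr 1
  convert rfl

lemma av_add {X : Type*} [Finite X] (f g : X → ℝ) : av (fun x => f x + g x) = av f + av g := by
  have := Fintype.ofFinite X
  simp only [av_eq, Finset.sum_add_distrib, add_div]

lemma av_sub {X : Type*} [Finite X] (f g : X → ℝ) : av (fun x => f x - g x) = av f - av g := by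
  have := Fintype.ofFinite X
  simp only [av_eq, Finset.sum_sub_distrib, sub_div]

lemma av_mul {X : Type*} [Finite X] (c : ℝ) (f : X → ℝ) : av (fun x => c * f x) = c * av f := by
  have := Fintype.ofFinite X
  simp only [av_eq, ← Finset.mul_sum, mul_div_assoc]

lemma av_mono {X : Type*} [Finite X] {f g : X → ℝ} (h : ∀ x, f x ≤ g x) : av f ≤ av g := by
  have := Fintype.ofFinite X
  simp only [av_eq]
  gcongr
  exact h _

lemma av_const {X : Type*} [Finite X] [Nonempty X] (c : ℝ) : av (fun _ : X => c) = c := by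
  have := Fintype.ofFinite X
  have h : (Fintype.card X : ℝ) ≠ 0 := by exact_mod_cast Fintype.card_ne_zero
  simp only [av_eq, Finset.sum_const, Finset.card_univ, nsmul_eq_mul]
  field_simp

lemma av_nonneg {X : Type*} [Finite X] {f : X → ℝ} (h : ∀ x, 0 ≤ f x) : 0 ≤ av f := by
  have := Fintype.ofFinite X
  rw [av_eq]
  exact div_nonneg (Finset.sum_nonneg fun x _ => h x) (Nat.cast_nonneg _)

lemma av_le_const {X : Type*} [Finite X] {f : X → ℝ} {c : ℝ} (hc : 0 ≤ c) (h : ∀ x, f x ≤ c) :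
    av f ≤ c := by
  rcases isEmpty_or_nonempty X with hX | hX
  · have := Fintype.ofFinite X
    rw [av_eq]; simpa using hc
  · calc av f ≤ av (fun _ : X => c) := av_mono h
      _ = c := av_const c

lemma le_av_of {X : Type*} [Finite X] [Nonempty X] {f : X → ℝ} {c : ℝ} (h : ∀ x, c ≤ f x) :
    c ≤ av f := by
  calc c = av (fun _ : X => c) := (av_const c).symm
    _ ≤ av f := av_mono h

lemma av_equiv {X Y : Type*} [Finite X] [Finite Y] (e : X ≃ Y) (f : Y → ℝ) :
    av (fun x => f (e x)) = av f := by
  have := Fintype.ofFinite X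
  have := Fintype.ofFinite Y
  rw [av_eq, av_eq, Fintype.card_congr e, Equiv.sum_comp e f]

lemma av_prod {X Y : Type*} [Finite X] [Finite Y] (f : X × Y → ℝ) :
    av f = av (fun x => av (fun y => f (x, y))) := by
  have := Fintype.ofFinite X
  have := Fintype.ofFinite Y
  simp only [av_eq, Fintype.card_prod, Fintype.sum_prod_type, ← Finset.sum_div]
  push_cast
  rw [div_div, mul_comm]

lemma av_comm {X Y : Type*} [Finite X] [Finite Y] (f : X → Y → ℝ) :
    av (fun x => av (fun y => f x y)) = av (fun y => av (fun x => f x y)) := by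
  rw [← av_prod (fun p : X × Y => f p.1 p.2), ← av_prod (fun p : Y × X => f p.2 p.1),
    ← av_equiv (Equiv.prodComm X Y)]
  rfl

lemma exists_le_av {X : Type*} [Finite X] [Nonempty X] (f : X → ℝ) : ∃ x, av f ≤ f x := by
  by_contra h
  push Not at h
  have := Fintype.ofFinite X
  have h2 : ∑ x, f x < ∑ x : X, av f := Finset.sum_lt_sum_of_nonempty Finset.univ_nonempty
    (fun x _ => h x)
  have h0 : (Fintype.card X : ℝ) ≠ 0 := by exact_mod_cast Fintype.card_ne_zero
  rw [Finset.sum_const, Finset.card_univ, nsmul_eq_mul, av_eq] at h2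
  field_simp at h2
  exact lt_irrefl _ h2

lemma av_fsum {X Φ : Type*} [Finite X] [Fintype Φ] (f : Φ → X → ℝ) :
    av (fun x => ∑ p, f p x) = ∑ p, av (f p) := by
  have := Fintype.ofFinite X
  simp only [av_eq, ← Finset.sum_div]
  rw [Finset.sum_comm]

/-- pigeonhole -/
lemma pigeon {X Φ : Type*} [Finite X] [Finite Φ] (G : Φ → X → Prop) {c : ℝ} (hc : 0 < c)
    (h : c ≤ av (fun x => ind (∃ p, G p x))) :
    ∃ p, c / (Nat.card Φ : ℝ) ≤ av (fun x => ind (G p x)) := by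
  have := Fintype.ofFinite Φ
  by_contra hcon
  push Not at hcon
  have h1 : av (fun x => ind (∃ p, G p x)) ≤ ∑ p, av (fun x => ind (G p x)) := by
    rw [← av_fsum]
    apply av_mono
    intro x
    by_cases hx : ∃ p, G p x
    · obtain ⟨p, hp⟩ := hx
      calc ind _ ≤ 1 := ind_le_one _
        _ = ind (G p x) := (ind_true hp).symm
        _ ≤ _ := Finset.single_le_sum (f := fun p => ind (G p x)) (fun i _ => ind_nonneg _)
          (Finset.mem_univ p)
    · rw [ind_false hx]
      exact Finset.sum_nonneg fun i _ => ind_nonneg _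
  rcases isEmpty_or_nonempty Φ with hE | hN
  · rw [Finset.univ_eq_empty, Finset.sum_empty] at h1; linarith
  have h2 : ∑ p, av (fun x => ind (G p x)) < ∑ p : Φ, c / (Nat.card Φ : ℝ) :=
    Finset.sum_lt_sum_of_nonempty Finset.univ_nonempty (fun p _ => hcon p)
  have h0 : (Fintype.card Φ : ℝ) ≠ 0 := by exact_mod_cast Fintype.card_ne_zero
  rw [Finset.sum_const, Finset.card_univ, nsmul_eq_mul, Nat.card_eq_fintype_card] at h2
  field_simp at h2
  linarith

/-- Markov type lemma -/
lemma markov {X : Type*} [Finite X] [Nonempty X] (f : X → ℝ) (G : X → Prop) {b : ℝ} (hb : 0 ≤ b)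
    (hf1 : ∀ x, f x ≤ 1) (hG : ∀ x, b ≤ f x → G x) (h : 2 * b ≤ av f) :
    b ≤ av (fun x => ind (G x)) := by
  have : av f ≤ av (fun x => b + ind (G x)) := by
    apply av_mono
    intro x
    by_cases hx : b ≤ f x
    · rw [ind_true (hG x hx)]; linarith [hf1 x]
    · linarith [ind_nonneg (G x)]
  rw [av_add, av_const] at this
  linarith

lemma av_sumArrow {ι κ β : Type*} [Finite ι] [Finite κ] [Finite β] (f : (ι ⊕ κ → β) → ℝ) :
    av f = av (fun x : ι → β => av (fun y : κ → β => f (Sum.elim x y))) := by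
  rw [← av_prod (fun p : (ι → β) × (κ → β) => f (Sum.elim p.1 p.2)),
    ← av_equiv (Equiv.sumArrowEquivProdArrow ι κ β).symm]
  rfl

lemma av_option {α : Type*} [Finite α] (f : Option α → ℝ) :
    av f = (f none + Nat.card α * av (fun a => f (some a))) / (Nat.card α + 1) := by
  have := Fintype.ofFinite α
  rw [av_eq, av_eq, Fintype.sum_option, Fintype.card_option, Nat.card_eq_fintype_card]
  push_cast
  congr 2
  rcases isEmpty_or_nonempty α with hE | hN
  · simp
  · have h0 : (Fintype.card α : ℝ) ≠ 0 := by exact_mod_cast Fintype.card_ne_zero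
    field_simp

lemma av_update {J W : Type*} [Finite J] [Finite W] (j0 : J) [DecidableEq J] (G : (J → W) → ℝ) :
    av G = av (fun t => av (fun f => G (Function.update t j0 f))) := by
  have e := Equiv.funSplitAt j0 W
  rw [← av_equiv (Equiv.funSplitAt j0 W).symm G,
    ← av_equiv (Equiv.funSplitAt j0 W).symm (fun t => av (fun f => G (Function.update t j0 f))),
    av_prod, av_prod, av_comm]
  rcases isEmpty_or_nonempty W with hE | hN
  · have := Fintype.ofFinite W
    rw [av_eq (X := W)]
    simp only [Finset.univ_eq_empty, Finset.sum_empty]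
    rw [av_comm, av_eq (X := W)]
    simp
  have : ∀ (ρ : {j // j ≠ j0} → W) (f' f : W),
      Function.update ((Equiv.funSplitAt j0 W).symm (f', ρ)) j0 f
        = (Equiv.funSplitAt j0 W).symm (f, ρ) := by
    intro ρ f' f
    ext j
    by_cases hj : j = j0
    · subst hj; simp [Equiv.funSplitAt]
    · simp [Equiv.funSplitAt, hj]
  simp only [this]
  rw [av_const]

/-! ### Combinatorial subspaces -/

/-- substitution map -/
def sub {ι β η : Type*} (φ : ι → β ⊕ η) (x : η → β) : ι → β := fun i => Sum.elim id x (φ i)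

/-- every variable occurs -/
def Proper {ι β η : Type*} (φ : ι → β ⊕ η) : Prop := ∀ h, ∃ i, φ i = Sum.inr h

/-- composition -/
def scomp {ι β η θ : Type*} (φ : ι → β ⊕ η) (ψ : η → β ⊕ θ) : ι → β ⊕ θ :=
  fun i => Sum.elim Sum.inl ψ (φ i)

lemma sub_scomp {ι β η θ : Type*} (φ : ι → β ⊕ η) (ψ : η → β ⊕ θ) (x : θ → β) :
    sub (scomp φ ψ) x = sub φ (sub ψ x) := by
  ext i
  unfold sub scomp
  cases h : φ i <;> simp

lemma proper_scomp {ι β η θ : Type*} {φ : ι → β ⊕ η} {ψ : η → β ⊕ θ} (h1 : Proper φ)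
    (h2 : Proper ψ) : Proper (scomp φ ψ) := by
  intro h
  obtain ⟨j, hj⟩ := h2 h
  obtain ⟨i, hi⟩ := h1 j
  exact ⟨i, by simp [scomp, hi, hj]⟩

lemma sub_injective {ι β η : Type*} {φ : ι → β ⊕ η} (h : Proper φ) :
    Function.Injective (sub φ) := by
  intro x y hxy
  ext j
  obtain ⟨i, hi⟩ := h j
  have := congrFun hxy i
  simpa [sub, hi] using this

end S14
end

section
namespace S14

/-- the density Hales-Jewett property at density `δ` -/
def Good (α : Type) [Finite α] (δ : ℝ) : Prop :=
  ∃ (ι : Type) (_ : Finite ι), ∀ A : Set (ι → α), δ ≤ av (fun x => ind (x ∈ A)) →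
    ∃ s : ι → Option α, (∃ i, s i = none) ∧ ∀ a, (fun i => (s i).getD a) ∈ A

def DHJ (α : Type) [Finite α] : Prop := ∀ δ > 0, Good α δ

@[elab_as_elim]
lemma fin_ind {P : (η : Type) → Finite η → Prop}
    (h1 : ∀ (η η' : Type) (_ : η ≃ η'), (∀ h, P η h) → ∀ h, P η' h)
    (h2 : ∀ h, P PEmpty h) (h3 : ∀ (η : Type) (_ : Fintype η), (∀ h, P η h) → ∀ h, P (Option η) h)
    (η : Type) (h : Finite η) : P η h := by
  have := @Finite.induction_empty_option (fun η => ∀ h, P η h) (fun {a b} e => h1 a b e) h2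
    (fun {a} i => h3 a i) η h
  exact this h

lemma dim_one (α : Type) [Finite α] (B : ℕ) : ∃ (ι : Type) (_ : Finite ι),
    ∀ (f : (ι → Option α) → ℝ) (M : ℝ), 0 ≤ M → (∀ x, f x ≤ 1) →
    (∀ φ : ι → Option α ⊕ Unit, Proper φ → av (fun a : α => f (sub φ (fun _ => some a))) ≤ M) →
    av f ≤ M + (1 / (Nat.card α + 1 : ℝ)) ^ B := by
  induction B with
  | zero =>
    refine ⟨Empty, inferInstance, fun f M hM hf _ => ?_⟩
    have := av_le_const zero_le_one hf
    simp; linarith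
  | succ B ih =>
    obtain ⟨ι, hι, ih⟩ := ih
    refine ⟨Unit ⊕ ι, inferInstance, fun f M hM hf hφ => ?_⟩
    rw [av_sumArrow, ← av_equiv (Equiv.funUnique Unit (Option α)).symm, av_option]
    set K : ℝ := (Nat.card α : ℝ) with hK
    have hK0 : 0 ≤ K := by positivity
    have h1 : av (fun y : ι → Option α => f (Sum.elim (fun _ => none) y))
        ≤ M + (1 / (K + 1)) ^ B := by
      apply ih _ M hM (fun x => hf _)
      intro φ hp
      have := hφ (Sum.elim (fun _ => Sum.inl none) φ) (fun h => by
        obtain ⟨i, hi⟩ := hp h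
        exact ⟨Sum.inr i, hi⟩)
      convert this using 4 with a
      ext i
      rcases i with i | i <;> simp [sub]
    have h2 : av (fun a : α => av (fun y : ι → Option α => f (Sum.elim (fun _ => some a) y)))
        ≤ M := by
      rw [av_comm]
      apply av_le_const hM
      intro y
      have := hφ (Sum.elim (fun _ => Sum.inr ()) (fun i => Sum.inl (y i))) (fun h => ⟨Sum.inl (), rfl⟩)
      convert this using 4 with a
      ext i
      rcases i with i | i <;> simp [sub]
    have e1 : ∀ b : Option α, (Equiv.funUnique Unit (Option α)).symm b = fun _ => b := fun b => rfl
    simp only [e1]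
    rw [div_le_iff₀ (by positivity)]
    have h3 := mul_le_mul_of_nonneg_left h2 hK0
    have h4 : (M + (1 / (K + 1)) ^ (B + 1)) * (K + 1) = M + (1 / (K + 1)) ^ B + K * M := by
      rw [pow_succ]
      field_simp
      ring
    rw [h4]
    linarith

lemma dim_one' (α : Type) [Finite α] [Nonempty α] (ε : ℝ) (hε : 0 < ε) :
    ∃ (ι : Type) (_ : Finite ι),
    ∀ (f : (ι → Option α) → ℝ), (∀ x, 0 ≤ f x) → (∀ x, f x ≤ 1) →
    ∃ φ : ι → Option α ⊕ Unit, Proper φ ∧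
      av f ≤ av (fun a : α => f (sub φ (fun _ => some a))) + ε := by
  have hK : (0 : ℝ) < Nat.card α := by exact_mod_cast Nat.card_pos
  obtain ⟨B, hB⟩ := exists_pow_lt_of_lt_one (show 0 < min ε (1/2) by positivity)
    (show 1 / (Nat.card α + 1 : ℝ) < 1 by rw [div_lt_one (by positivity)]; linarith)
  obtain ⟨hB, hB2⟩ := lt_min_iff.1 hB
  obtain ⟨ι, hι, h⟩ := dim_one α B
  refine ⟨ι, hι, fun f hf0 hf => ?_⟩
  by_contra hcon
  push Not at hcon
  by_cases hM : 0 ≤ av f - ε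
  · have := h f (av f - ε) hM hf (fun φ hp => by linarith [hcon φ hp])
    linarith
  · have := h f 0 le_rfl hf (fun φ hp => by
      have := hcon φ hp
      have h2 := av_nonneg (fun a : α => hf0 (sub φ (fun _ => some a)))
      linarith)
    by_cases hex : ∃ φ : ι → Option α ⊕ Unit, Proper φ
    · obtain ⟨φ, hp⟩ := hex
      have := hcon φ hp
      have h2 := av_nonneg (fun a : α => hf0 (sub φ (fun _ => some a)))
      linarith
    · have := h (fun _ => 1) 0 le_rfl (fun _ => le_rfl) (fun φ hp => (hex ⟨φ, hp⟩).elim)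
      rw [av_const] at this
      linarith

lemma dim_many (α : Type) [Finite α] [Nonempty α] (η : Type) (hη : Finite η) :
    ∀ ε > (0 : ℝ), ∃ (ι : Type) (_ : Finite ι),
    ∀ (f : (ι → Option α) → ℝ), (∀ x, 0 ≤ f x) → (∀ x, f x ≤ 1) →
    ∃ φ : ι → Option α ⊕ η, Proper φ ∧
      av f ≤ av (fun x : η → α => f (sub φ (fun h => some (x h)))) + ε := by
  refine fin_ind ?_ ?_ ?_ η hη
  · intro η η' e ih hη' ε hε
    have : Finite η := Finite.of_equiv _ e.symm
    obtain ⟨ι, hι, h⟩ := ih this ε hε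
    refine ⟨ι, hι, fun f hf0 hf1 => ?_⟩
    obtain ⟨φ, hp, hφ⟩ := h f hf0 hf1
    refine ⟨fun i => Sum.map id e (φ i), fun h => ?_, ?_⟩
    · obtain ⟨i, hi⟩ := hp (e.symm h)
      exact ⟨i, by simp [hi]⟩
    · refine hφ.trans (le_of_eq ?_)
      congr 1
      rw [← av_equiv (Equiv.arrowCongr e (Equiv.refl α))]
      congr 1
      ext x
      congr 1
      ext1 i
      unfold sub
      cases h : φ i <;> simp [h]
  · intro _ ε hε
    refine ⟨PEmpty, inferInstance, fun f hf0 hf1 => ⟨fun i => i.elim, fun h => h.elim, ?_⟩⟩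
    have h1 : av f = f (fun i => i.elim) := by
      have : f = fun _ => f (fun i => i.elim) := by
        ext x; congr 1; ext1 i; exact i.elim
      rw [this, av_const]
    rw [h1]
    have h2 : ∀ z : PEmpty → Option α, f (fun i => i.elim) = f z := by
      intro z; congr 1; ext1 i; exact i.elim
    simp only [← h2]
    rw [av_const]
    linarith
  · intro η hf ih _ ε hε
    obtain ⟨ι₁, hι₁, h₁⟩ := dim_one' α (ε / 2) (by positivity)
    obtain ⟨ι₂, hι₂, h₂⟩ := ih inferInstance (ε / 2) (by positivity)
    refine ⟨ι₁ ⊕ ι₂, inferInstance, fun f hf0 hf1 => ?_⟩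
    obtain ⟨φ₁, hp₁, hφ₁⟩ := h₁ (fun x => av (fun y => f (Sum.elim x y)))
      (fun x => av_nonneg fun y => hf0 _) (fun x => av_le_const zero_le_one fun y => hf1 _)
    obtain ⟨φ₂, hp₂, hφ₂⟩ := h₂ (fun y => av (fun a : α => f (Sum.elim (sub φ₁ (fun _ => some a)) y)))
      (fun x => av_nonneg fun y => hf0 _) (fun x => av_le_const zero_le_one fun y => hf1 _)
    refine ⟨Sum.elim (fun i => Sum.map id (fun _ => none) (φ₁ i))
      (fun i => Sum.map id some (φ₂ i)), fun h => ?_, ?_⟩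
    · cases h with
      | none =>
        obtain ⟨i, hi⟩ := hp₁ ()
        exact ⟨Sum.inl i, by simp [hi]⟩
      | some h =>
        obtain ⟨i, hi⟩ := hp₂ h
        exact ⟨Sum.inr i, by simp [hi]⟩
    · rw [av_sumArrow]
      rw [av_comm (fun (a : α) (y : ι₂ → Option α) => f (Sum.elim (sub φ₁ fun _ => some a) y))] at hφ₁
      refine hφ₁.trans ?_
      refine (add_le_add hφ₂ le_rfl).trans (le_of_eq ?_)
      rw [add_assoc, add_halves]
      congr 1
      rw [av_comm, ← av_prod (fun p : α × (η → α) => f (Sum.elim (sub φ₁ (fun _ => some p.1))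
        (sub φ₂ fun h => some (p.2 h)))), ← av_equiv (Equiv.piOptionEquivProd (β := fun _ => α))]
      congr 1
      ext x
      congr 1
      ext1 i
      rcases i with i | i
      · simp only [sub, Sum.elim_inl]
        cases h : φ₁ i <;> simp [Equiv.piOptionEquivProd]
      · simp only [sub, Sum.elim_inr]
        cases h : φ₂ i <;> simp [Equiv.piOptionEquivProd]

/-- subspaces in dense sets, one-dimensional case -/
lemma sub_one (α : Type) [Finite α] [Nonempty α] (hD : DHJ α) (b : ℝ) (hb : 0 < b) :
    ∃ (ι : Type) (_ : Finite ι), ∀ P : Set (ι → Option α), b ≤ av (fun x => ind (x ∈ P)) →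
    ∃ φ : ι → Option α ⊕ Unit, Proper φ ∧ ∀ x : Unit → α, sub φ (fun h => some (x h)) ∈ P := by
  obtain ⟨κ, hκ, hG⟩ := hD (b / 2) (by positivity)
  obtain ⟨ι, hι, hR⟩ := dim_many α κ hκ (b / 2) (by positivity)
  refine ⟨ι, hι, fun P hP => ?_⟩
  obtain ⟨φ, hp, hφ⟩ := hR (fun x => ind (x ∈ P)) (fun x => ind_nonneg _) (fun x => ind_le_one _)
  obtain ⟨s, ⟨i0, hi0⟩, hs⟩ := hG {x | sub φ (fun h => some (x h)) ∈ P} (by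
    simp only [Set.mem_ofPred_eq]; linarith)
  refine ⟨scomp φ (fun j => (s j).elim (Sum.inr ()) (fun a => Sum.inl (some a))),
    proper_scomp hp (fun h => ⟨i0, by simp [hi0]⟩), fun x => ?_⟩
  rw [sub_scomp]
  have e : sub (fun j => (s j).elim (Sum.inr ()) (fun a => Sum.inl (some a)))
      (fun h => some (x h)) = fun j => some ((s j).getD (x ())) := by
    ext1 j
    unfold sub
    cases h : s j <;> simp [h]
  rw [e]
  exact hs (x ())

lemma sub_many (α : Type) [Finite α] [Nonempty α] (hD : DHJ α) (η : Type) (hη : Finite η) :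
    ∀ b > (0 : ℝ), ∃ (ι : Type) (_ : Finite ι), ∀ P : Set (ι → Option α),
    b ≤ av (fun x => ind (x ∈ P)) →
    ∃ φ : ι → Option α ⊕ η, Proper φ ∧ ∀ x : η → α, sub φ (fun h => some (x h)) ∈ P := by
  refine fin_ind ?_ ?_ ?_ η hη
  · intro η η' e ih hη' ε hε
    have : Finite η := Finite.of_equiv _ e.symm
    obtain ⟨ι, hι, h⟩ := ih this ε hε
    refine ⟨ι, hι, fun P hP => ?_⟩
    obtain ⟨φ, hp, hφ⟩ := h P hP
    refine ⟨fun i => Sum.map id e (φ i), fun h => ?_, fun x => ?_⟩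
    · obtain ⟨i, hi⟩ := hp (e.symm h)
      exact ⟨i, by simp [hi]⟩
    · convert hφ (fun h => x (e h)) using 1
      ext1 i
      unfold sub
      cases h : φ i <;> simp [h]
  · intro _ b hb
    refine ⟨PEmpty, inferInstance, fun P hP => ⟨fun i => i.elim, fun h => h.elim, fun x => ?_⟩⟩
    obtain ⟨y, hy⟩ := exists_le_av (fun x => ind (x ∈ P))
    have : y ∈ P := by
      by_contra h
      rw [ind_false h] at hy
      linarith
    convert this using 1
    ext1 i
    exact i.elim
  · intro η hf ih _ b hb
    obtain ⟨ι₁, hι₁, h₁⟩ := sub_one α hD (b / 2) (by positivity)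
    have hcard : (0 : ℝ) < Nat.card (ι₁ → Option α ⊕ Unit) := by exact_mod_cast Nat.card_pos
    obtain ⟨ι₂, hι₂, h₂⟩ := ih inferInstance (b / 2 / Nat.card (ι₁ → Option α ⊕ Unit)) (by positivity)
    refine ⟨ι₁ ⊕ ι₂, inferInstance, fun P hP => ?_⟩
    rw [av_sumArrow, av_comm] at hP
    have hm := markov (fun y : ι₂ → Option α => av fun x : ι₁ → Option α => ind (Sum.elim x y ∈ P))
      (fun y => ∃ φ : ι₁ → Option α ⊕ Unit, Proper φ ∧
        ∀ x : Unit → α, Sum.elim (sub φ (fun h => some (x h))) y ∈ P) (b := b / 2) (by positivity)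
      (fun y => av_le_const zero_le_one fun x => ind_le_one _)
      (fun y hy => h₁ {x | Sum.elim x y ∈ P} hy) (by linarith)
    obtain ⟨φ₁, hφ₁⟩ := pigeon _ (by positivity) hm
    obtain ⟨φ₂, hp₂, hφ₂⟩ := h₂ {y | Proper φ₁ ∧
        ∀ x : Unit → α, Sum.elim (sub φ₁ (fun h => some (x h))) y ∈ P} hφ₁
    have hp₁ : Proper φ₁ := (hφ₂ (fun _ => Classical.arbitrary α)).1
    refine ⟨Sum.elim (fun i => Sum.map id (fun _ => none) (φ₁ i))
      (fun i => Sum.map id some (φ₂ i)), fun h => ?_, fun x => ?_⟩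
    · cases h with
      | none =>
        obtain ⟨i, hi⟩ := hp₁ ()
        exact ⟨Sum.inl i, by simp [hi]⟩
      | some h =>
        obtain ⟨i, hi⟩ := hp₂ h
        exact ⟨Sum.inr i, by simp [hi]⟩
    · convert (hφ₂ (fun h => x (some h))).2 (fun _ => x none) using 1
      ext1 i
      rcases i with i | i
      · simp only [sub, Sum.elim_inl]
        cases h : φ₁ i <;> simp [h]
      · simp only [sub, Sum.elim_inr]
        cases h : φ₂ i <;> simp [h]

end S14
end

section
namespace S14

/-- collapse the extra letter to `a` -/
def col {α : Type} (a : α) (b : Option α) : Option α := some (b.getD a)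

/-- insensitive sets -/
def Insens {α ι : Type} (a : α) (P : Set (ι → Option α)) : Prop :=
  ∀ x, x ∈ P ↔ (fun i => col a (x i)) ∈ P

lemma col_col {α : Type} (a : α) (b : Option α) : col a (col a b) = col a b := by
  cases b <;> rfl

lemma insens_sub {α ι η : Type} (a : α) (P : Set (ι → Option α)) (hP : Insens a P)
    (φ : ι → Option α ⊕ η) : Insens a {x | sub φ x ∈ P} := by
  intro x
  change sub φ x ∈ P ↔ sub φ _ ∈ P
  rw [hP, hP (sub φ (fun i => col a (x i)))]
  have : (fun i => col a (sub φ x i)) = fun i => col a (sub φ (fun i => col a (x i)) i) := by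
    ext1 i
    unfold sub
    cases h : φ i <;> simp [col_col]
  rw [this]

/-- `P` can be almost partitioned into `η`-dimensional subspaces (functional form) -/
def Qp {α ι : Type} [Finite α] [Finite ι] (P : Set (ι → Option α)) (η : Type) [Finite η]
    (ε : ℝ) : Prop :=
  ∀ g : (ι → Option α) → ℝ, (∀ x, g x ≤ 1) →
    (∀ φ : ι → Option α ⊕ η, Proper φ → (∀ x, sub φ x ∈ P) → av (fun x => g (sub φ x)) ≤ 0) →
    av (fun y => ind (y ∈ P) * g y) ≤ ε

lemma av_range {X W : Type} [Finite X] [Finite W] (e : X → W) (he : Function.Injective e)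
    (h : W → ℝ) (hh : av (fun x => h (e x)) ≤ 0) :
    av (fun w => ind (w ∈ Set.range e) * h w) ≤ 0 := by
  classical
  have := Fintype.ofFinite X
  have := Fintype.ofFinite W
  rw [av_eq] at hh ⊢
  apply div_nonpos_of_nonpos_of_nonneg _ (Nat.cast_nonneg _)
  have h1 : ∑ w, ind (w ∈ Set.range e) * h w = ∑ x, h (e x) := by
    rw [← Finset.sum_image (s := Finset.univ) (g := e) (f := h) (fun a _ b _ hab => he hab)]
    rw [← Finset.sum_subset (Finset.subset_univ (Finset.univ.image e))]
    · apply Finset.sum_congr rfl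
      intro w hw
      rw [ind_true, one_mul]
      simpa using hw
    · intro w _ hw
      rw [ind_false, zero_mul]
      simpa using hw
  rw [h1]
  rcases isEmpty_or_nonempty X with hE | hN
  · simp
  · have : (0 : ℝ) < Fintype.card X := by exact_mod_cast Fintype.card_pos
    rw [div_le_iff₀ this] at hh
    linarith

lemma part_single_aux (α : Type) [Finite α] [Nonempty α] (hD : DHJ α) (a : α) (η : Type) [Finite η]
    (ε : ℝ) (hε : 0 < ε) : ∃ ζ : ℝ, 0 < ζ ∧ ζ ≤ 1 ∧ ∀ t : ℕ, ∃ (ι : Type) (_ : Finite ι),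
    ∀ P : Set (ι → Option α), Insens a P →
    ∀ g : (ι → Option α) → ℝ, (∀ x, g x ≤ 1) →
    (∀ φ : ι → Option α ⊕ η, Proper φ → (∀ x, sub φ x ∈ P) → av (fun x => g (sub φ x)) ≤ 0) →
    av (fun y => ind (y ∈ P) * g y) ≤ ε + (1 - ζ) ^ t * av (fun y => ind (y ∈ P)) := by
  obtain ⟨ι₀, hι₀, hX⟩ := sub_many α hD η inferInstance (ε / 2) (by positivity)
  have hc1 : (0 : ℝ) < Nat.card (ι₀ → Option α ⊕ η) := by exact_mod_cast Nat.card_pos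
  have hc2 : (0 : ℝ) < Nat.card (ι₀ → Option α) := by exact_mod_cast Nat.card_pos
  set ζ₁ : ℝ := ε / 2 / Nat.card (ι₀ → Option α ⊕ η) / Nat.card (ι₀ → Option α) with hζ₁
  have hζ₁0 : 0 < ζ₁ := by positivity
  refine ⟨min ζ₁ 1, by positivity, min_le_right _ _, fun t => ?_⟩
  set ζ := min ζ₁ 1 with hζ
  have hζ0 : 0 ≤ 1 - ζ := by linarith [min_le_right ζ₁ 1]
  induction t with
  | zero =>
    refine ⟨Empty, inferInstance, fun P hP g hg _ => ?_⟩
    have : av (fun y => ind (y ∈ P) * g y) ≤ av (fun y => ind (y ∈ P)) := by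
      apply av_mono
      intro y
      have := mul_le_mul_of_nonneg_left (hg y) (ind_nonneg (y ∈ P))
      linarith
    simp; linarith
  | succ t ih =>
    obtain ⟨κ, hκ, ih⟩ := ih
    refine ⟨ι₀ ⊕ κ, inferInstance, fun P hP g hg hφ => ?_⟩
    have htriv : av (fun y => ind (y ∈ P) * g y) ≤ av (fun y => ind (y ∈ P)) := by
      apply av_mono
      intro y
      have := mul_le_mul_of_nonneg_left (hg y) (ind_nonneg (y ∈ P))
      linarith
    have hPnn : 0 ≤ av (fun y => ind (y ∈ P)) := av_nonneg fun y => ind_nonneg _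
    have hP1 : av (fun y => ind (y ∈ P)) ≤ 1 := av_le_const zero_le_one fun y => ind_le_one _
    by_cases hsmall : av (fun y => ind (y ∈ P)) ≤ ε
    · have : 0 ≤ (1 - ζ) ^ (t + 1) * av (fun y => ind (y ∈ P)) := by positivity
      linarith
    push Not at hsmall
    have hins : ∀ (w : ι₀ → Option α) (y : κ → Option α),
        Sum.elim w y ∈ P ↔ Sum.elim w (fun i => col a (y i)) ∈ P := by
      intro w y
      rw [hP, hP (Sum.elim w (fun i => col a (y i)))]
      have : (fun i => col a (Sum.elim w y i)) = fun i => col a (Sum.elim w (fun i => col a (y i)) i) := by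
        ext1 i
        rcases i with i | i <;> simp [col_col]
      rw [this]
    have hins2 : ∀ (y : κ → Option α), Insens a {w : ι₀ → Option α | Sum.elim w y ∈ P} := by
      intro y w
      change Sum.elim w y ∈ P ↔ Sum.elim _ y ∈ P
      rw [hP, hP (Sum.elim _ y)]
      have : (fun i => col a (Sum.elim w y i)) = fun i => col a (Sum.elim (fun i => col a (w i)) y i) := by
        ext1 i
        rcases i with i | i <;> simp [col_col]
      rw [this]
    have hm := markov (fun y : κ → Option α => av fun x : ι₀ → Option α => ind (Sum.elim x y ∈ P))
      (fun y => ∃ φ : ι₀ → Option α ⊕ η, Proper φ ∧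
        ∀ x : η → Option α, Sum.elim (sub φ x) y ∈ P) (b := ε / 2) (by positivity)
      (fun y => av_le_const zero_le_one fun x => ind_le_one _)
      (fun y hy => by
        obtain ⟨φ, hp, h⟩ := hX {x | Sum.elim x y ∈ P} hy
        refine ⟨φ, hp, fun x => ?_⟩
        have := insens_sub a _ (hins2 y) φ x
        exact this.2 (h (fun i => (x i).getD a)))
      (by rw [av_comm, ← av_sumArrow (fun y => ind (y ∈ P))]; linarith)
    obtain ⟨φ, hφ1⟩ := pigeon _ (by positivity) hm
    set Z : Set (κ → Option α) := {y | Proper φ ∧ ∀ x : η → Option α, Sum.elim (sub φ x) y ∈ P} with hZ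
    change _ ≤ av (fun y => ind (y ∈ Z)) at hφ1
    have hZne : ∃ y, y ∈ Z := by
      by_contra h
      push Not at h
      have : av (fun y => ind (y ∈ Z)) ≤ 0 := av_le_const le_rfl fun y => by rw [ind_false (h y)]
      have h3 : 0 < ε / 2 / (Nat.card (ι₀ → Option α ⊕ η) : ℝ) := by positivity
      linarith
    obtain ⟨y0, hp, hy0⟩ := hZne
    have hinj := sub_injective hp
    set U : Set (ι₀ → Option α) := Set.range (sub φ) with hU
    -- split
    have hsplit : ∀ w y, ind (Sum.elim w y ∈ P) =
        ind (y ∈ Z) * ind (w ∈ U) + ind (Sum.elim w y ∈ P ∧ ¬ (w ∈ U ∧ y ∈ Z)) := by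
      intro w y
      by_cases h1 : w ∈ U
      · by_cases h2 : y ∈ Z
        · have h3 : Sum.elim w y ∈ P := by
            obtain ⟨x, rfl⟩ := h1
            exact h2.2 x
          rw [ind_true h3, ind_true h1, ind_true h2, ind_false (by tauto)]; norm_num
        · rw [ind_false h2]; simp [h2]
      · rw [ind_false h1]; simp [h1]
    have hfirst : av (fun w => av (fun y => ind (y ∈ Z) * ind (w ∈ U) * g (Sum.elim w y))) ≤ 0 := by
      rw [av_comm]
      apply av_le_const le_rfl
      intro y
      by_cases hy : y ∈ Z
      · rw [ind_true hy]
        simp only [one_mul]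
        apply av_range _ hinj (fun w => g (Sum.elim w y))
        have := hφ (Sum.elim φ (fun i => Sum.inl (y i))) (fun h => by
            obtain ⟨i, hi⟩ := hp h
            exact ⟨Sum.inl i, hi⟩)
        have e : ∀ x, sub (Sum.elim φ (fun i => Sum.inl (y i))) x = Sum.elim (sub φ x) y := by
          intro x
          ext1 i
          rcases i with i | i <;> simp [sub]
        simp only [e] at this
        exact this hy.2
      · rw [ind_false hy]
        simp only [zero_mul]
        exact av_le_const le_rfl fun _ => le_rfl
    have hsecond : ∀ w, av (fun y => ind (Sum.elim w y ∈ P ∧ ¬ (w ∈ U ∧ y ∈ Z)) * g (Sum.elim w y))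
        ≤ ε + (1 - ζ) ^ t * av (fun y => ind (Sum.elim w y ∈ P ∧ ¬ (w ∈ U ∧ y ∈ Z))) := by
      intro w
      refine ih {y | Sum.elim w y ∈ P ∧ ¬ (w ∈ U ∧ y ∈ Z)} ?_ (fun y => g (Sum.elim w y))
        (fun x => hg _) ?_
      · intro y
        have hz : y ∈ Z ↔ (fun i => col a (y i)) ∈ Z := by
          rw [hZ]
          constructor
          · rintro ⟨h1, h2⟩; exact ⟨h1, fun x => (hins _ _).1 (h2 x)⟩
          · rintro ⟨h1, h2⟩; exact ⟨h1, fun x => (hins _ _).2 (h2 x)⟩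
        change (_ ∧ _) ↔ (_ ∧ _)
        rw [hins, hz]
      · intro ψ hψ hψ2
        have := hφ (Sum.elim (fun i => Sum.inl (w i)) ψ) (fun h => by
            obtain ⟨i, hi⟩ := hψ h
            exact ⟨Sum.inr i, hi⟩)
        have e : ∀ x, sub (Sum.elim (fun i => Sum.inl (w i)) ψ) x = Sum.elim w (sub ψ x) := by
          intro x
          ext1 i
          rcases i with i | i <;> simp [sub]
        simp only [e] at this
        exact this (fun x => (hψ2 x).1)
    -- combine
    have hUZ : ζ ≤ av (fun w => av (fun y => ind (y ∈ Z) * ind (w ∈ U))) := by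
      refine (min_le_left _ _).trans ?_
      rw [av_comm]
      have e1 : ∀ y, av (fun w => ind (y ∈ Z) * ind (w ∈ U)) = av (fun w => ind (w ∈ U)) * ind (y ∈ Z) := by
        intro y
        rw [av_mul, mul_comm]
      simp only [e1]
      rw [av_mul]
      have e2 : 1 / (Nat.card (ι₀ → Option α) : ℝ) ≤ av (fun w => ind (w ∈ U)) := by
        have := Fintype.ofFinite (ι₀ → Option α)
        rw [av_eq, Nat.card_eq_fintype_card]
        gcongr
        calc (1:ℝ) = ind (sub φ (fun _ => none) ∈ U) := (ind_true ⟨_, rfl⟩).symm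
          _ ≤ _ := Finset.single_le_sum (f := fun w => ind (w ∈ U)) (fun i _ => ind_nonneg _)
            (Finset.mem_univ _)
      have e3 : 0 ≤ av (fun w => ind (w ∈ U)) := av_nonneg fun _ => ind_nonneg _
      rw [hζ₁, div_eq_mul_one_div _ (Nat.card (ι₀ → Option α) : ℝ), mul_comm]
      gcongr
    have hPs : av (fun y => ind (y ∈ P)) = av (fun w => av (fun y => ind (y ∈ Z) * ind (w ∈ U)))
        + av (fun w => av (fun y => ind (Sum.elim w y ∈ P ∧ ¬ (w ∈ U ∧ y ∈ Z)))) := by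
      rw [av_sumArrow]
      simp only [hsplit]
      simp only [av_add]
    have hgs : av (fun y => ind (y ∈ P) * g y)
        = av (fun w => av (fun y => ind (y ∈ Z) * ind (w ∈ U) * g (Sum.elim w y)))
        + av (fun w => av (fun y => ind (Sum.elim w y ∈ P ∧ ¬ (w ∈ U ∧ y ∈ Z)) * g (Sum.elim w y))) := by
      rw [av_sumArrow]
      simp only [hsplit, add_mul]
      simp only [av_add]
    have hlast := av_mono hsecond
    rw [av_add, av_const, av_mul] at hlast
    rw [hgs]
    have hpw : 0 ≤ (1 - ζ) ^ t := by positivity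
    have hfin : (1 - ζ) ^ t * av (fun w => av (fun y => ind (Sum.elim w y ∈ P ∧ ¬ (w ∈ U ∧ y ∈ Z))))
        ≤ (1 - ζ) ^ (t + 1) * av (fun y => ind (y ∈ P)) := by
      rw [pow_succ, mul_assoc]
      gcongr
      have : 0 ≤ ζ := by positivity
      nlinarith
    linarith

lemma part_single (α : Type) [Finite α] [Nonempty α] (hD : DHJ α) (a : α) (η : Type) [Finite η]
    (ε : ℝ) (hε : 0 < ε) : ∃ (ι : Type) (_ : Finite ι),
    ∀ P : Set (ι → Option α), Insens a P → Qp P η ε := by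
  obtain ⟨ζ, h0, h1, h⟩ := part_single_aux α hD a η (ε / 2) (by positivity)
  obtain ⟨t, ht⟩ := exists_pow_lt_of_lt_one (show 0 < ε / 2 by positivity)
    (show 1 - ζ < 1 by linarith)
  obtain ⟨ι, hι, h⟩ := h t
  refine ⟨ι, hι, fun P hP g hg hφ => (h P hP g hg hφ).trans ?_⟩
  have hP1 : av (fun y => ind (y ∈ P)) ≤ 1 := av_le_const zero_le_one fun y => ind_le_one _
  have : 0 ≤ (1 - ζ) ^ t := pow_nonneg (by linarith) t
  nlinarith

lemma part_multi (α : Type) [Finite α] [Nonempty α] (hD : DHJ α) (L : ℕ) (S : Finset α) :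
    ∀ (η : Type) (_ : Finite η) (ε : ℝ) (_ : 0 < ε), ∃ (ι : Type) (_ : Finite ι), L ≤ Nat.card ι ∧
    ∀ P : α → Set (ι → Option α), (∀ a ∈ S, Insens a (P a)) → Qp {x | ∀ a ∈ S, x ∈ P a} η ε := by
  classical
  induction S using Finset.induction_on with
  | empty =>
    intro η hη ε hε
    refine ⟨η ⊕ Fin L, inferInstance, by simp, fun P _ g hg hφ => ?_⟩
    simp only [Finset.notMem_empty, false_implies, implies_true, Set.ofPred_true, Set.mem_univ,
      ind_true, one_mul]
    rw [av_sumArrow, av_comm]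
    apply av_le_const hε.le
    intro y
    have := hφ (Sum.elim (fun i => Sum.inr i) (fun i => Sum.inl (y i))) (fun h => ⟨Sum.inl h, rfl⟩)
      (fun x a ha => by simp at ha)
    refine le_trans (le_of_eq ?_) (this.trans hε.le)
    congr 1
    ext x
    congr 1
    ext1 i
    rcases i with i | i <;> simp [sub]
  | insert a S ha ih =>
    intro η hη ε hε
    obtain ⟨κ, hκ, h1⟩ := part_single α hD a η (ε / 2) (by positivity)
    obtain ⟨ι, hι, hL, h2⟩ := ih κ hκ (ε / 2) (by positivity)
    refine ⟨ι, hι, hL, fun P hP g hg hφ => ?_⟩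
    have := h2 P (fun b hb => hP b (Finset.mem_insert_of_mem hb))
      (fun y => ind (y ∈ P a) * g y - ε / 2) (fun y => by
        have := mul_le_mul_of_nonneg_left (hg y) (ind_nonneg (y ∈ P a))
        linarith [ind_le_one (y ∈ P a)])
      (fun φ hp hsub => by
        rw [av_sub, av_const]
        have := h1 {x | sub φ x ∈ P a} (insens_sub a _ (hP a (Finset.mem_insert_self _ _)) φ)
          (fun x => g (sub φ x)) (fun x => hg _) (fun ψ hψ hψ2 => by
            have := hφ (scomp φ ψ) (proper_scomp hp hψ) (fun x b hb => by
              rw [sub_scomp]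
              rcases Finset.mem_insert.1 hb with rfl | hb
              · exact hψ2 x
              · exact hsub (sub ψ x) b hb)
            simpa only [sub_scomp] using this)
        have h3 : av (fun x => ind (sub φ x ∈ P a) * g (sub φ x)) ≤ ε / 2 := this
        linarith)
    have e : ∀ y, ind (y ∈ {x | ∀ b ∈ S, x ∈ P b}) * (ind (y ∈ P a) * g y - ε / 2)
        = ind (y ∈ {x | ∀ b ∈ insert a S, x ∈ P b}) * g y
          - ε / 2 * ind (y ∈ {x | ∀ b ∈ S, x ∈ P b}) := by
      intro y
      have : ind (y ∈ {x | ∀ b ∈ insert a S, x ∈ P b})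
          = ind (y ∈ {x | ∀ b ∈ S, x ∈ P b}) * ind (y ∈ P a) := by
        simp only [Finset.forall_mem_insert, Set.mem_ofPred_eq, ind]
        split_ifs <;> simp_all
      rw [this]; ring
    simp only [e] at this
    rw [av_sub, av_mul] at this
    have h4 : av (fun y => ind (y ∈ {x | ∀ b ∈ S, x ∈ P b})) ≤ 1 :=
      av_le_const zero_le_one fun y => ind_le_one _
    nlinarith

end S14
end

section
namespace S14

lemma av_none (α ι : Type) [Finite α] [Finite ι] :
    av (fun f : ι → Option α => ind (∀ i, f i ≠ none)) ≤
      ((Nat.card α : ℝ) / (Nat.card α + 1)) ^ (Nat.card ι) := by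
  classical
  have := Fintype.ofFinite α
  have := Fintype.ofFinite ι
  rw [av_eq]
  have h1 : ∑ f : ι → Option α, ind (∀ i, f i ≠ none) ≤ (Fintype.card (ι → α) : ℝ) := by
    have h2 : ∑ f : ι → Option α, ind (∀ i, f i ≠ none) =
      ((Finset.univ.filter (fun f : ι → Option α => ∀ i, f i ≠ none)).card : ℝ) := by
      rw [Finset.card_filter]
      push_cast
      apply Finset.sum_congr rfl
      intro f _
      unfold ind
      split_ifs <;> simp
    rw [h2]
    have h3 : (Finset.univ.filter (fun f : ι → Option α => ∀ i, f i ≠ none)) ⊆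
        Finset.univ.image (fun (g : ι → α) (i : ι) => some (g i)) := by
      intro f hf
      simp only [Finset.mem_filter, Finset.mem_univ, true_and] at hf
      have := fun i => Option.ne_none_iff_exists'.1 (hf i)
      choose g hg using this
      simp only [Finset.mem_image, Finset.mem_univ, true_and]
      exact ⟨g, by ext1 i; rw [hg]⟩
    exact_mod_cast (Finset.card_le_card h3).trans (Finset.card_image_le.trans (by simp))
  calc _ ≤ (Fintype.card (ι → α) : ℝ) / Fintype.card (ι → Option α) := by gcongr
    _ = _ := by
      simp only [Fintype.card_fun, Fintype.card_option, Nat.card_eq_fintype_card]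
      push_cast
      rw [div_pow]

lemma insens_compl {α ι : Type} {a : α} {P : Set (ι → Option α)} (h : Insens a P) :
    Insens a Pᶜ := fun x => not_congr (h x)

/-- a set without lines correlates little with complements of intersections -/
lemma core_one (α : Type) [Finite α] [Nonempty α] (ι η : Type) [Finite ι] [Finite η] (ε δ' : ℝ)
    (hδ' : 0 ≤ δ')
    (hG : ∀ A : Set (η → Option α), δ' ≤ av (fun x => ind (x ∈ A)) →
      ∃ s : η → Option (Option α), (∃ i, s i = none) ∧ ∀ a, (fun i => (s i).getD a) ∈ A)
    (hQ : ∀ P : α → Set (ι → Option α), (∀ a, Insens a (P a)) → Qp {x | ∀ a, x ∈ P a} η ε)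
    (A : Set (ι → Option α)) (D : α → Set (ι → Option α)) (hD : ∀ a, Insens a (D a))
    (hA : ∀ s : ι → Option (Option α), (∃ i, s i = none) →
      (∀ a, (fun i => (s i).getD a) ∈ A) → False) (S : Finset α) :
    av (fun f => ind (¬ ∀ a ∈ S, f ∈ D a) * (ind (f ∈ A) - δ')) ≤ S.card * ε := by
  classical
  induction S using Finset.induction_on with
  | empty =>
    simp only [Finset.notMem_empty, false_implies, implies_true, not_true_eq_false]
    rw [ind_false (fun h => h)]
    simp only [zero_mul, Finset.card_empty, Nat.cast_zero]
    exact av_le_const le_rfl fun _ => le_rfl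
  | insert a S ha ih =>
    have key : ∀ f, ind (¬ ∀ b ∈ insert a S, f ∈ D b) * (ind (f ∈ A) - δ') =
        ind (¬ ∀ b ∈ S, f ∈ D b) * (ind (f ∈ A) - δ') +
        ind (f ∈ {x | ∀ b, x ∈ (if b = a then (D a)ᶜ else if b ∈ S then D b else Set.univ)}) *
          (ind (f ∈ A) - δ') := by
      intro f
      rw [← add_mul]
      congr 1
      have e : f ∈ {x | ∀ b, x ∈ (if b = a then (D a)ᶜ else if b ∈ S then D b else Set.univ)} ↔
          f ∉ D a ∧ ∀ b ∈ S, f ∈ D b := by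
        constructor
        · intro h
          refine ⟨by simpa using h a, fun b hb => ?_⟩
          have := h b
          rw [if_neg (by rintro rfl; exact ha hb), if_pos hb] at this
          exact this
        · rintro ⟨h1, h2⟩ b
          split_ifs with h3 h4
          · exact h1
          · exact h2 b h4
          · trivial
      have e2 : (¬ ∀ b ∈ insert a S, f ∈ D b) ↔ f ∉ D a ∨ ¬ ∀ b ∈ S, f ∈ D b := by
        rw [Finset.forall_mem_insert]; tauto
      rw [e, e2]
      generalize (∀ b ∈ S, f ∈ D b) = q
      unfold ind
      by_cases h1 : f ∈ D a <;> by_cases h2 : q <;> simp [h1, h2]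
    simp only [key]
    rw [av_add]
    have h2 := hQ (fun b => if b = a then (D a)ᶜ else if b ∈ S then D b else Set.univ) (by
      intro b
      split_ifs with h3 h4
      · rw [h3]; exact insens_compl (hD a)
      · exact hD b
      · exact fun x => Iff.rfl) (fun f => ind (f ∈ A) - δ') (fun x => by linarith [ind_le_one (x ∈ A)])
      (by
        intro φ hp _
        by_contra hcon
        push Not at hcon
        rw [av_sub, av_const] at hcon
        obtain ⟨s, ⟨h0, hh0⟩, hs⟩ := hG {x | sub φ x ∈ A} (by
          simp only [Set.mem_ofPred_eq]; linarith)
        obtain ⟨i0, hi0⟩ := hp h0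
        refine hA (fun i => (φ i).elim some s) ⟨i0, by simp [hi0, hh0]⟩ (fun a => ?_)
        have hs' : sub φ (fun i => (s i).getD a) ∈ A := hs a
        convert hs' using 1
        ext1 i
        unfold sub
        cases h : φ i <;> simp)
    rw [Finset.card_insert_of_notMem ha]
    push_cast
    linarith

lemma core_two (α : Type) [Finite α] [Nonempty α] (ι η : Type) [Finite ι] [Finite η] (ε εq δ' : ℝ)
    (hδ' : 0 ≤ δ')
    (hG : ∀ A : Set (η → Option α), δ' ≤ av (fun x => ind (x ∈ A)) →
      ∃ s : η → Option (Option α), (∃ i, s i = none) ∧ ∀ a, (fun i => (s i).getD a) ∈ A)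
    (hQ : ∀ P : α → Set (ι → Option α), (∀ a, Insens a (P a)) → Qp {x | ∀ a, x ∈ P a} η ε)
    (hq : av (fun f : ι → Option α => ind (∀ i, f i ≠ none)) ≤ εq)
    (A : Set (ι → Option α)) (D : α → Set (ι → Option α)) (hD : ∀ a, Insens a (D a))
    (hA : ∀ s : ι → Option (Option α), (∃ i, s i = none) →
      (∀ a, (fun i => (s i).getD a) ∈ A) → False)
    (hAD : ∀ f ∈ A, (∀ a, f ∈ D a) → ∀ i, f i ≠ none) :
    av (fun f => ind (f ∈ A) + δ' * ind (∀ a, f ∈ D a)) ≤ δ' + Nat.card α * ε + εq := by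
  have := Fintype.ofFinite α
  have h1 := core_one α ι η ε δ' hδ' hG hQ A D hD hA Finset.univ
  simp only [Finset.mem_univ, true_implies, Finset.card_univ] at h1
  rw [Nat.card_eq_fintype_card]
  have h2 : av (fun f => ind (f ∈ A) + δ' * ind (∀ a, f ∈ D a)) ≤
      av (fun f => (δ' + ind (¬ ∀ a, f ∈ D a) * (ind (f ∈ A) - δ')) + ind (∀ i, f i ≠ none)) := by
    apply av_mono
    intro f
    by_cases hf : ∀ a, f ∈ D a
    · rw [ind_true hf, ind_false (not_not.2 hf)]
      have : ind (f ∈ A) ≤ ind (∀ i, f i ≠ none) := ind_mono (fun h => hAD f h hf)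
      linarith
    · rw [ind_false hf, ind_true hf]
      linarith [ind_nonneg (∀ i, f i ≠ none)]
  refine h2.trans ?_
  rw [av_add, av_add, av_const]
  linarith

lemma av_lower {Y : Type} [Finite Y] [Nonempty Y] (f : Y → ℝ) (M c : ℝ) (hf : ∀ y, f y ≤ M)
    (h : c ≤ av f) (y : Y) : M - Nat.card Y * (M - c) ≤ f y := by
  classical
  have := Fintype.ofFinite Y
  have hc : (0 : ℝ) < Fintype.card Y := by exact_mod_cast Fintype.card_pos
  rw [av_eq, le_div_iff₀ hc] at h
  rw [Nat.card_eq_fintype_card]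
  have h1 : M - f y ≤ ∑ y, (M - f y) :=
    Finset.single_le_sum (f := fun y => M - f y) (fun i _ => by linarith [hf i]) (Finset.mem_univ y)
  rw [Finset.sum_sub_distrib, Finset.sum_const, Finset.card_univ, nsmul_eq_mul] at h1
  linarith

end S14
end

section
namespace S14

lemma good_mono {α : Type} [Finite α] {δ δ' : ℝ} (h : δ ≤ δ') (hG : Good α δ) : Good α δ' := by
  obtain ⟨ι, hι, hG⟩ := hG
  exact ⟨ι, hι, fun A hA => hG A (h.trans hA)⟩

lemma good_two {α : Type} [Finite α] : Good α 2 := by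
  refine ⟨Unit, inferInstance, fun A hA => ?_⟩
  have := av_le_const zero_le_one (fun x : Unit → α => ind_le_one (x ∈ A))
  linarith

/-- combine a frame `t` and a word `s` -/
def cmb {α J F : Type} (t : J → F → Option α) (s : J → Option α) : J → F → Option α :=
  fun j i => (t j i).or (s j)

lemma cmb_col {α J F : Type} (t : J → F → Option α) (s : J → Option α) (a : α) :
    cmb t (fun j => some ((s j).getD a)) = fun j i => col a (cmb t s j i) := by
  ext1 j; ext1 i
  unfold cmb col
  cases t j i <;> simp

lemma core_three (α : Type) [Finite α] [Nonempty α] (hD : DHJ α) (δ : ℝ) (hδ : 0 < δ)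
    (hGood : ∀ δ' > δ, Good (Option α) δ') : ∃ δ'' < δ, Good (Option α) δ'' := by
  classical
  obtain ⟨J, hJ, hM⟩ := hD (δ / 4) (by positivity)
  have hk : (0 : ℝ) < Nat.card α := by exact_mod_cast Nat.card_pos
  have hcJ : (0 : ℝ) < Nat.card (J → Option α) := by exact_mod_cast Nat.card_pos
  set γ : ℝ := δ / 4 / Nat.card (J → Option α) with hγ
  have hγ0 : 0 < γ := by positivity
  obtain ⟨η, hη, hGd⟩ := hGood (δ + δ * γ / 4) (lt_add_of_pos_right _ (by positivity))
  set δ' := δ + δ * γ / 4 with hδ'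
  obtain ⟨L, hL⟩ := exists_pow_lt_of_lt_one (show 0 < δ * γ / 8 by positivity)
    (show (Nat.card α : ℝ) / (Nat.card α + 1) < 1 by rw [div_lt_one (by positivity)]; linarith)
  have := Fintype.ofFinite α
  obtain ⟨F, hF, hLF, hQ⟩ := part_multi α hD L Finset.univ η hη (δ * γ / 8 / Nat.card α) (by positivity)
  have hq : av (fun f : F → Option α => ind (∀ i, f i ≠ none)) ≤ δ * γ / 8 := by
    refine (av_none α F).trans (le_trans ?_ hL.le)
    exact pow_le_pow_of_le_one (by positivity) (by rw [div_le_one (by positivity)]; linarith) hLF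
  set κ := min (δ / 2) (δ * γ / 4) with hκ
  have hκ0 : 0 < κ := by positivity
  have hcY : (0 : ℝ) < Nat.card (J → F → Option α) := by exact_mod_cast Nat.card_pos
  set ρ := κ / (2 * Nat.card (J → F → Option α)) with hρ
  have hρ0 : 0 < ρ := by positivity
  obtain ⟨R, hR, hGr⟩ := hGood (δ + ρ) (by linarith)
  refine ⟨δ - ρ, by linarith, (J × F) ⊕ R, inferInstance, fun A hA => ?_⟩
  by_contra hno
  -- words
  set mk : (J → F → Option α) → (R → Option α) → ((J × F) ⊕ R → Option α) :=
    fun y z => Sum.elim (fun p => y p.1 p.2) z with hmk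
  have hA2 : δ - ρ ≤ av (fun y : J → F → Option α => av (fun z => ind (mk y z ∈ A))) := by
    rw [av_sumArrow, ← av_equiv (Equiv.curry J F (Option α)).symm] at hA
    exact hA
  -- no line
  have hnl : ∀ (y : J → F → Option (Option α)) (z : R → Option (Option α)),
      ((∃ j i, y j i = none) ∨ ∃ r, z r = none) →
      (∀ a : Option α, mk (fun j i => (y j i).getD a) (fun r => (z r).getD a) ∈ A) → False := by
    intro y z h1 h2
    apply hno
    refine ⟨Sum.elim (fun p => y p.1 p.2) z, ?_, fun a => ?_⟩
    · rcases h1 with ⟨j, i, h⟩ | ⟨r, h⟩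
      · exact ⟨Sum.inl (j, i), h⟩
      · exact ⟨Sum.inr r, h⟩
    · convert h2 a using 1
      ext1 i
      rcases i with i | i <;> simp [hmk]
  clear_value mk
  have hsec : ∀ y, av (fun z => ind (mk y z ∈ A)) ≤ δ + ρ := by
    intro y
    by_contra hcon
    push Not at hcon
    obtain ⟨s, ⟨r, hr⟩, hs⟩ := hGr {z | mk y z ∈ A} hcon.le
    refine hnl (fun j i => some (y j i)) s (Or.inr ⟨r, hr⟩) (fun a => ?_)
    exact hs a
  have hlow : ∀ y, δ - κ ≤ av (fun z => ind (mk y z ∈ A)) := by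
    intro y
    have := av_lower _ _ _ hsec hA2 y
    have e : (Nat.card (J → F → Option α) : ℝ) * (δ + ρ - (δ - ρ)) = κ := by
      rw [hρ]; field_simp; ring
    linarith
  have hκ1 : κ ≤ δ / 2 := min_le_left _ _
  have hκ2 : κ ≤ δ * γ / 4 := min_le_right _ _
  -- find s
  have hG1 : ∀ t : J → F → Option α, δ / 4 ≤ av (fun z => ind (∃ s : J → Option α, (∃ j, s j = none) ∧
      ∀ a, mk (cmb t (fun j => some ((s j).getD a))) z ∈ A)) := by
    intro t
    refine markov (fun z => av (fun v : J → α => ind (mk (cmb t (fun j => some (v j))) z ∈ A))) _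
      (by positivity) (fun z => av_le_const zero_le_one fun v => ind_le_one _) (fun z hz => ?_) ?_
    · exact hM {v | mk (cmb t (fun j => some (v j))) z ∈ A} hz
    · rw [av_comm]
      exact le_av_of (fun v => by linarith [hlow (cmb t (fun j => some (v j)))])
  have hG2 : δ / 4 ≤ av (fun p : (J → F → Option α) × (R → Option α) =>
      ind (∃ s : J → Option α, (∃ j, s j = none) ∧
      ∀ a, mk (cmb p.1 (fun j => some ((s j).getD a))) p.2 ∈ A)) := by
    rw [av_prod]
    exact le_av_of hG1
  obtain ⟨s, hs⟩ := pigeon _ (by positivity) hG2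
  rw [← hγ] at hs
  have hj0 : ∃ j, s j = none := by
    by_contra h
    have : av (fun p : (J → F → Option α) × (R → Option α) => ind ((∃ j, s j = none) ∧
      ∀ a, mk (cmb p.1 (fun j => some ((s j).getD a))) p.2 ∈ A)) ≤ 0 :=
      av_le_const le_rfl fun p => by rw [ind_false (fun h2 => h h2.1)]
    linarith
  obtain ⟨j0, hj0⟩ := hj0
  have hs2 : γ ≤ av (fun t : J → F → Option α => av (fun z =>
      ind (∀ a, mk (cmb t (fun j => some ((s j).getD a))) z ∈ A))) := by
    rw [← av_prod (fun p : (J → F → Option α) × (R → Option α) =>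
      ind (∀ a, mk (cmb p.1 (fun j => some ((s j).getD a))) p.2 ∈ A))]
    exact hs.trans (av_mono fun p => ind_mono fun h => h.2)
  have hδ'0 : 0 < δ' := by positivity
  have hbig : δ - κ + δ' * γ ≤ av (fun t : J → F → Option α => av (fun z => 
      ind (mk (cmb t s) z ∈ A) + δ' * ind (∀ a, mk (cmb t (fun j => some ((s j).getD a))) z ∈ A))) := by
    simp only [av_add, av_mul]
    have := le_av_of (fun t : J → F → Option α => hlow (cmb t s))
    have := mul_le_mul_of_nonneg_left hs2 hδ'0.le
    linarith
  rw [av_update j0] at hbig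
  obtain ⟨t, ht⟩ := exists_le_av (fun t : J → F → Option α => av (fun f => av (fun z => 
      ind (mk (cmb (Function.update t j0 f) s) z ∈ A) +
      δ' * ind (∀ a, mk (cmb (Function.update t j0 f) (fun j => some ((s j).getD a))) z ∈ A))))
  have ht2 := hbig.trans ht
  rw [av_comm] at ht2
  obtain ⟨z, hz⟩ := exists_le_av (fun z => av (fun f => 
      ind (mk (cmb (Function.update t j0 f) s) z ∈ A) +
      δ' * ind (∀ a, mk (cmb (Function.update t j0 f) (fun j => some ((s j).getD a))) z ∈ A)))
  have hfin := ht2.trans hz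
  have hcmb : ∀ f j i, cmb (Function.update t j0 f) s j i = if j = j0 then f i else (t j i).or (s j) := by
    intro f j i
    unfold cmb
    split_ifs with h
    · subst h; simp [hj0]
    · simp [h]
  have hmem : ∀ y y' z, (∀ j i, y j i = y' j i) → mk y' z ∈ A → mk y z ∈ A := by
    intro y y' z h h'
    have : y = y' := by ext1 j; ext1 i; exact h j i
    rw [this]; exact h'
  have hup := core_two α F η (δ * γ / 8 / Nat.card α) (δ * γ / 8) δ' hδ'0.le hGd
    (fun P hP => by have := hQ P (fun a _ => hP a); simpa using this) hq
    {f | mk (cmb (Function.update t j0 f) s) z ∈ A}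
    (fun a => {f | mk (cmb (Function.update t j0 f) (fun j => some ((s j).getD a))) z ∈ A})
    (by
      intro a f
      change mk (cmb (Function.update t j0 f) (fun j => some ((s j).getD a))) z ∈ A ↔ 
        mk (cmb (Function.update t j0 _) (fun j => some ((s j).getD a))) z ∈ A
      rw [cmb_col, cmb_col]
      simp only [hcmb]
      have : ∀ j i, col a (if j = j0 then f i else (t j i).or (s j)) = 
          col a (if j = j0 then col a (f i) else (t j i).or (s j)) := by
        intro j i
        split_ifs
        · rw [col_col]
        · rfl
      simp only [this])
    (by
      rintro σ ⟨i, hi⟩ hσ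
      refine hnl (fun j i => if j = j0 then σ i else some ((t j i).or (s j))) (fun r => some (z r))
        (Or.inl ⟨j0, i, by simp [hi]⟩) (fun a => ?_)
      have h3 : mk (cmb (Function.update t j0 (fun i => (σ i).getD a)) s) z ∈ A := hσ a
      refine hmem _ _ _ (fun j i => ?_) h3
      rw [hcmb]
      split_ifs <;> rfl)
    (by
      intro f hf hfD i hi
      refine hnl (fun j i => (cmb (Function.update t j0 f) s j i).map some) (fun r => some (z r))
        (Or.inl ⟨j0, i, by simp [hcmb, hi]⟩) (fun a => ?_)
      cases a with
      | none =>
        have h3 : mk (cmb (Function.update t j0 f) s) z ∈ A := hf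
        refine hmem _ _ _ (fun j i => ?_) h3
        cases cmb (Function.update t j0 f) s j i <;> rfl
      | some a =>
        have h3 : mk (cmb (Function.update t j0 f) (fun j => some ((s j).getD a))) z ∈ A := hfD a
        rw [cmb_col] at h3
        refine hmem _ _ _ (fun j i => ?_) h3
        cases cmb (Function.update t j0 f) s j i <;> rfl)
  have h5 := hfin.trans hup
  have h6 : (Nat.card α : ℝ) * (δ * γ / 8 / Nat.card α) = δ * γ / 8 := by field_simp
  rw [h6] at h5
  have h7 : δ * γ ≤ δ' * γ := by
    apply mul_le_mul_of_nonneg_right _ hγ0.le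
    rw [hδ']
    have : 0 < δ * γ / 4 := by positivity
    linarith
  have h8 : 0 < δ * γ := by positivity
  linarith

lemma dhj_option (α : Type) [Finite α] [Nonempty α] (hD : DHJ α) : DHJ (Option α) := by
  by_contra hcon
  unfold DHJ at hcon
  push Not at hcon
  obtain ⟨δ1, h1, hδ1⟩ := hcon
  set T := {δ : ℝ | Good (Option α) δ} with hT
  have hbd : ∀ x ∈ T, δ1 ≤ x := by
    intro x hx
    by_contra h
    push Not at h
    exact hδ1 (good_mono h.le hx)
  have hne : T.Nonempty := ⟨2, good_two⟩
  have hlb : δ1 ≤ sInf T := le_csInf hne hbd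
  obtain ⟨δ2, h2, h3⟩ := core_three α hD (sInf T) (by linarith) (fun δ' h => by
    obtain ⟨x, hx, hx2⟩ := exists_lt_of_csInf_lt hne h
    exact good_mono hx2.le hx)
  have : sInf T ≤ δ2 := csInf_le ⟨δ1, hbd⟩ h3
  linarith

lemma dhj_equiv {α β : Type} [Finite α] [Finite β] (e : α ≃ β) (h : DHJ α) : DHJ β := by
  intro δ hδ
  obtain ⟨ι, hι, h⟩ := h δ hδ
  refine ⟨ι, hι, fun A hA => ?_⟩
  obtain ⟨s, ⟨i, hi⟩, hs⟩ := h {x | (fun i => e (x i)) ∈ A} (by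
    rw [← av_equiv (Equiv.arrowCongr (Equiv.refl ι) e)] at hA
    exact hA)
  refine ⟨fun i => (s i).map e, ⟨i, by simp [hi]⟩, fun b => ?_⟩
  have : (fun i => e ((s i).getD (e.symm b))) ∈ A := hs (e.symm b)
  convert this using 1
  ext1 i
  cases h : s i <;> simp [h]

theorem dhj_all (k : ℕ) : DHJ (Fin (k + 1)) := by
  induction k with
  | zero =>
    intro δ hδ
    refine ⟨Unit, inferInstance, fun A hA => ⟨fun _ => none, ⟨(), rfl⟩, fun a => ?_⟩⟩
    obtain ⟨x, hx⟩ := exists_le_av (fun x => ind (x ∈ A))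
    have hxA : x ∈ A := by
      by_contra h
      rw [ind_false h] at hx
      linarith
    convert hxA using 1
    ext1 i
    exact Subsingleton.elim (α := Fin 1) _ _
  | succ k ih =>
    exact dhj_equiv (finSuccEquiv (k + 1)).symm (dhj_option _ ih)

end S14
end

section
namespace S14

section Hilbert

variable {H : Type} [NormedAddCommGroup H] [InnerProductSpace ℝ H]

/-- averages along arithmetic progressions -/
noncomputable def aav (U : H →ₗᵢ[ℝ] H) (x D R : ℕ) (h : H) : H :=
  (R : ℝ)⁻¹ • ∑ r ∈ Finset.range R, (U ^ (x + D * r)) h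

lemma upow_add (U : H →ₗᵢ[ℝ] H) (m n : ℕ) (h : H) : (U ^ (m + n)) h = (U ^ m) ((U ^ n) h) := by
  rw [pow_add]; rfl

lemma aav_add (U : H →ₗᵢ[ℝ] H) (x D R : ℕ) (h g : H) :
    aav U x D R (h + g) = aav U x D R h + aav U x D R g := by
  simp only [aav, map_add, Finset.sum_add_distrib, smul_add]

lemma aav_sub (U : H →ₗᵢ[ℝ] H) (x D R : ℕ) (h g : H) :
    aav U x D R (h - g) = aav U x D R h - aav U x D R g := by
  simp only [aav, map_sub, Finset.sum_sub_distrib, smul_sub]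

lemma aav_norm (U : H →ₗᵢ[ℝ] H) (x D R : ℕ) (h : H) : ‖aav U x D R h‖ ≤ ‖h‖ := by
  unfold aav
  rw [norm_smul]
  have h1 : ‖∑ r ∈ Finset.range R, (U ^ (x + D * r)) h‖ ≤ R * ‖h‖ := by
    refine (norm_sum_le _ _).trans ?_
    simp
  rcases Nat.eq_zero_or_pos R with rfl | hR
  · simp
  · have hR' : (0 : ℝ) < R := by exact_mod_cast hR
    rw [norm_inv, Real.norm_natCast]
    calc _ ≤ (R : ℝ)⁻¹ * (R * ‖h‖) := by gcongr
      _ = ‖h‖ := by field_simp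

lemma aav_pow (U : H →ₗᵢ[ℝ] H) (x D R y : ℕ) (h : H) :
    (U ^ y) (aav U x D R h) = aav U x D R ((U ^ y) h) := by
  unfold aav
  rw [map_smul, map_sum]
  congr 1
  apply Finset.sum_congr rfl
  intro r _
  rw [← upow_add, ← upow_add, add_comm]

lemma aav_smul (U : H →ₗᵢ[ℝ] H) (x D R : ℕ) (c : ℝ) (h : H) :
    aav U x D R (c • h) = c • aav U x D R h := by
  unfold aav
  simp only [map_smul, ← Finset.smul_sum]
  rw [smul_comm]

lemma aav_sum (U : H →ₗᵢ[ℝ] H) (x D R : ℕ) (s : Finset ℕ) (g : ℕ → H) :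
    aav U x D R (∑ i ∈ s, g i) = ∑ i ∈ s, aav U x D R (g i) := by
  classical
  induction s using Finset.induction_on with
  | empty => simp [aav]
  | insert a s ha ih => rw [Finset.sum_insert ha, Finset.sum_insert ha, aav_add, ih]

lemma aav_aav (U : H →ₗᵢ[ℝ] H) (x D R y D' R' : ℕ) (h : H) :
    aav U y D' R' (aav U x D R h) = aav U x D R (aav U y D' R' h) := by
  conv_lhs => unfold aav
  simp only [map_smul, map_sum]
  conv_rhs => rw [show aav U y D' R' h = (R' : ℝ)⁻¹ • ∑ r ∈ Finset.range R', (U ^ (y + D' * r)) h from rfl]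
  rw [aav_smul, aav_sum]
  congr 1
  apply Finset.sum_congr rfl
  intro r _
  rw [← aav_pow]
  unfold aav
  simp only [map_smul, map_sum]

lemma aav_shift (U : H →ₗᵢ[ℝ] H) (x D R : ℕ) (h : H) :
    ‖(U ^ D) (aav U x D R h) - aav U x D R h‖ ≤ 2 * ‖h‖ / R := by
  have e : (U ^ D) (aav U x D R h) - aav U x D R h =
      (R : ℝ)⁻¹ • ((U ^ (x + D * R)) h - (U ^ x) h) := by
    unfold aav
    rw [map_smul, map_sum, ← smul_sub, ← Finset.sum_sub_distrib]
    congr 1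
    have := Finset.sum_range_sub (fun r => (U ^ (x + D * r)) h) R
    simp only [mul_zero, add_zero] at this
    rw [← this]
    apply Finset.sum_congr rfl
    intro r _
    rw [← upow_add]
    congr 3
    ring
  rw [e, norm_smul, norm_inv, Real.norm_natCast]
  have : ‖(U ^ (x + D * R)) h - (U ^ x) h‖ ≤ 2 * ‖h‖ := by
    refine (norm_sub_le _ _).trans ?_
    simp only [LinearIsometry.norm_map]
    linarith
  rw [div_eq_inv_mul]
  gcongr

lemma aav_shift_many (U : H →ₗᵢ[ℝ] H) (x D R j : ℕ) (h : H) :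
    ‖(U ^ (D * j)) (aav U x D R h) - aav U x D R h‖ ≤ j * (2 * ‖h‖ / R) := by
  induction j with
  | zero => simp
  | succ j ih =>
    have e : (U ^ (D * (j + 1))) (aav U x D R h) - aav U x D R h =
        (U ^ (D * j)) ((U ^ D) (aav U x D R h) - aav U x D R h) +
        ((U ^ (D * j)) (aav U x D R h) - aav U x D R h) := by
      rw [map_sub, ← upow_add, mul_add, mul_one]; abel
    rw [e]
    refine (norm_add_le _ _).trans ?_
    rw [LinearIsometry.norm_map]
    have := aav_shift U x D R h
    push_cast
    linarith

lemma pair_one (U : H →ₗᵢ[ℝ] H) (x x' D D' R q q' s j : ℕ) (hq : q' * D = q * D' + s) (h : H) :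
    |inner ℝ (aav U x D R h) (aav U x' D' R h) -
      inner ℝ ((U ^ (s * j)) (aav U x D R h)) (aav U x' D' R h)| ≤
      j * ((q + q') * (2 * ‖h‖ ^ 2 / R)) := by
  set u := aav U x D R h with hu
  set u' := aav U x' D' R h with hu'
  have h1 := aav_shift_many U x D R (q' * j) h
  have h2 := aav_shift_many U x' D' R (q * j) h
  rw [← hu] at h1
  rw [← hu'] at h2
  have e1 : inner ℝ ((U ^ (s * j)) u) u' =
      inner ℝ ((U ^ (D * (q' * j))) u) ((U ^ (D' * (q * j))) u') := by
    have : D * (q' * j) = D' * (q * j) + s * j := by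
      calc D * (q' * j) = (q' * D) * j := by ring
        _ = _ := by rw [hq]; ring
    rw [this, upow_add, LinearIsometry.inner_map_map]
  rw [e1]
  set a := (U ^ (D * (q' * j))) u with ha
  set b := (U ^ (D' * (q * j))) u' with hb
  have e2 : inner ℝ u u' - inner ℝ a b = - inner ℝ (a - u) u' - inner ℝ a (b - u') := by
    rw [inner_sub_left, inner_sub_right]; ring
  rw [e2]
  have n1 : ‖u'‖ ≤ ‖h‖ := aav_norm _ _ _ _ _
  have n2 : ‖a‖ ≤ ‖h‖ := by rw [ha, LinearIsometry.norm_map]; exact aav_norm _ _ _ _ _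
  have i1 := abs_real_inner_le_norm (a - u) u'
  have i2 := abs_real_inner_le_norm a (b - u')
  have j1 : ‖a - u‖ * ‖u'‖ ≤ (q' * j : ℕ) * (2 * ‖h‖ / R) * ‖h‖ := by gcongr
  have j2 : ‖a‖ * ‖b - u'‖ ≤ ‖h‖ * ((q * j : ℕ) * (2 * ‖h‖ / R)) := by gcongr
  have j3 : |- inner ℝ (a - u) u' - inner ℝ a (b - u')| ≤ |inner ℝ (a - u) u'| + |inner ℝ a (b - u')| := by
    have := abs_sub (- inner ℝ (a - u) u') (inner ℝ a (b - u'))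
    rwa [abs_neg] at this
  refine j3.trans ((add_le_add (i1.trans j1) (i2.trans j2)).trans (le_of_eq ?_))
  push_cast
  ring

lemma pair_two (U : H →ₗᵢ[ℝ] H) (x x' D D' R q q' s J : ℕ) (hJ : 0 < J) (hq : q' * D = q * D' + s)
    (h : H) :
    |inner ℝ (aav U x D R h) (aav U x' D' R h)| ≤ ‖aav U 0 s J (aav U x D R h)‖ * ‖h‖ +
      J * ((q + q') * (2 * ‖h‖ ^ 2 / R)) := by
  set u := aav U x D R h with hu
  set u' := aav U x' D' R h with hu'
  have hJ' : (0 : ℝ) < J := by exact_mod_cast hJ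
  have e : inner ℝ u u' - inner ℝ (aav U 0 s J u) u' =
      (J : ℝ)⁻¹ * ∑ j ∈ Finset.range J, (inner ℝ u u' - inner ℝ ((U ^ (s * j)) u) u') := by
    unfold aav
    rw [real_inner_smul_left, sum_inner, Finset.sum_sub_distrib, mul_sub]
    simp only [zero_add, Finset.sum_const, Finset.card_range, nsmul_eq_mul]
    rw [inv_mul_cancel_left₀ hJ'.ne']
  have h1 : |inner ℝ u u' - inner ℝ (aav U 0 s J u) u'| ≤ J * ((q + q') * (2 * ‖h‖ ^ 2 / R)) := by
    rw [e, abs_mul, abs_of_pos (inv_pos.2 hJ')]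
    calc _ ≤ (J : ℝ)⁻¹ * ∑ j ∈ Finset.range J, (J * ((q + q') * (2 * ‖h‖ ^ 2 / R))) := by
          gcongr
          refine (Finset.abs_sum_le_sum_abs _ _).trans (Finset.sum_le_sum fun j hj => ?_)
          refine (pair_one U x x' D D' R q q' s j hq h).trans ?_
          have : (j : ℝ) ≤ J := by exact_mod_cast (Finset.mem_range.1 hj).le
          gcongr
      _ = _ := by
          rw [Finset.sum_const, Finset.card_range, nsmul_eq_mul, inv_mul_cancel_left₀ hJ'.ne']
  have h2 := abs_real_inner_le_norm (aav U 0 s J u) u'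
  have n1 : ‖u'‖ ≤ ‖h‖ := aav_norm _ _ _ _ _
  have h3 : ‖aav U 0 s J u‖ * ‖u'‖ ≤ ‖aav U 0 s J u‖ * ‖h‖ := by gcongr
  have h4 : |inner ℝ u u'| ≤ |inner ℝ u u' - inner ℝ (aav U 0 s J u) u'| + |inner ℝ (aav U 0 s J u) u'| := by
    have := abs_add_le (inner ℝ u u' - inner ℝ (aav U 0 s J u) u') (inner ℝ (aav U 0 s J u) u')
    rwa [sub_add_cancel] at this
  linarith

lemma upow_fix (U : H →ₗᵢ[ℝ] H) (s n : ℕ) (h : H) (hh : (U ^ s) h = h) : (U ^ (s * n)) h = h := by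
  induction n with
  | zero => simp
  | succ n ih => rw [mul_add, mul_one, upow_add, hh, ih]

lemma pair_three (U : H →ₗᵢ[ℝ] H) (x d R q s J : ℕ) (hs : s ∣ d) (h h' : H) (ε : ℝ)
    (hfix : (U ^ s) h' = h') (hJ : ‖aav U 0 s J h - h'‖ ≤ ε) (hR : ‖aav U 0 1 R h‖ ≤ ε) :
    ‖aav U 0 s J (aav U x (d * q + 1) R h)‖ ≤ 3 * ε := by
  rw [aav_aav]
  have e1 : aav U x (d * q + 1) R (aav U 0 s J h) =
      aav U x (d * q + 1) R (aav U 0 s J h - h') + aav U x (d * q + 1) R h' := by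
    rw [← aav_add, sub_add_cancel]
  have e2 : aav U x (d * q + 1) R h' = (U ^ x) (aav U 0 1 R h') := by
    unfold aav
    rw [map_smul, map_sum]
    congr 1
    apply Finset.sum_congr rfl
    intro r _
    obtain ⟨m, rfl⟩ := hs
    rw [← upow_add, show x + (s * m * q + 1) * r = (x + (0 + 1 * r)) + s * (m * q * r) by ring, upow_add,
      upow_fix U s _ h' hfix]
  have e3 : aav U 0 1 R h' = aav U 0 s J (aav U 0 1 R h) - aav U 0 1 R (aav U 0 s J h - h') := by
    rw [aav_aav, ← aav_sub]; congr 1; abel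
  have n1 : ‖aav U x (d * q + 1) R (aav U 0 s J h - h')‖ ≤ ε := (aav_norm _ _ _ _ _).trans hJ
  have n2 : ‖aav U 0 1 R h'‖ ≤ ε + ε := by
    rw [e3]
    refine (norm_sub_le _ _).trans (add_le_add ((aav_norm _ _ _ _ _).trans hR) ?_)
    exact (aav_norm _ _ _ _ _).trans hJ
  rw [e1]
  refine (norm_add_le _ _).trans ?_
  rw [e2, LinearIsometry.norm_map]
  linarith

lemma mean_erg [CompleteSpace H] (U : H →ₗᵢ[ℝ] H) (s : ℕ) (h : H) : ∃ h', (U ^ s) h' = h' ∧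
    Tendsto (fun J => aav U 0 s J h) atTop (nhds h') := by
  set f := (U ^ s).toContinuousLinearMap with hf
  have := ContinuousLinearMap.tendsto_birkhoffAverage_orthogonalProjection f
    (LinearIsometry.norm_toContinuousLinearMap_le _) h
  refine ⟨_, ?_, this.congr fun J => ?_⟩
  · have := ((f.eqLocus (1 : H →L[ℝ] H)).orthogonalProjectionOnto h).2
    exact this
  · unfold birkhoffAverage birkhoffSum aav
    congr 1
    apply Finset.sum_congr rfl
    intro r _
    rw [zero_add]
    have : ∀ r, f^[r] h = (U ^ (s * r)) h := by
      intro r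
      induction r with
      | zero => simp
      | succ r ih => rw [Function.iterate_succ_apply', ih, mul_add, mul_one, add_comm, upow_add]; rfl
    exact this r

end Hilbert

end S14
end

section
namespace S14

section HilbertTwo

variable {H : Type} [NormedAddCommGroup H] [InnerProductSpace ℝ H]

lemma norm_sum_sq (s : Finset ℕ) (v : ℕ → H) (C η : ℝ) (hη : 0 ≤ η) (h1 : ∀ q ∈ s, ‖v q‖ ≤ C)
    (h2 : ∀ q ∈ s, ∀ q' ∈ s, q ≠ q' → inner ℝ (v q) (v q') ≤ η) :
    ‖∑ q ∈ s, v q‖ ^ 2 ≤ s.card * C ^ 2 + s.card ^ 2 * η := by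
  classical
  rw [← real_inner_self_eq_norm_sq, sum_inner]
  have : ∀ q ∈ s, inner ℝ (v q) (∑ q ∈ s, v q) ≤ C ^ 2 + s.card * η := by
    intro q hq
    rw [inner_sum]
    have : ∀ q' ∈ s, inner ℝ (v q) (v q') ≤ (if q = q' then C ^ 2 else 0) + η := by
      intro q' hq'
      split_ifs with h
      · subst h
        rw [real_inner_self_eq_norm_sq]
        have := h1 q hq
        have := norm_nonneg (v q)
        nlinarith
      · have := h2 q hq q' hq' h
        linarith
    refine (Finset.sum_le_sum this).trans (le_of_eq ?_)
    rw [Finset.sum_add_distrib, Finset.sum_ite_eq, if_pos hq, Finset.sum_const, nsmul_eq_mul]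
  refine (Finset.sum_le_sum this).trans (le_of_eq ?_)
  rw [Finset.sum_const, nsmul_eq_mul]
  ring

lemma aav_fix (U : H →ₗᵢ[ℝ] H) (x D R : ℕ) (hR : 0 < R) (h : H) (hh : U h = h) :
    aav U x D R h = h := by
  have hp : ∀ n : ℕ, (U ^ n) h = h := fun n => by
    have := upow_fix U 1 n h (by rw [pow_one]; exact hh)
    rwa [one_mul] at this
  unfold aav
  simp only [hp, Finset.sum_const, Finset.card_range]
  rw [← Nat.cast_smul_eq_nsmul ℝ, smul_smul, inv_mul_cancel₀ (by exact_mod_cast hR.ne'), one_smul]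

theorem hilbert_main [CompleteSpace H] (U : H →ₗᵢ[ℝ] H) (f : H) (ε : ℝ) (hε : 0 < ε) (q0 : ℕ) :
    ∃ Q R J : ℕ, 1 ≤ Q ∧ 1 ≤ R ∧ 1 ≤ J ∧ ∀ d : ℕ, (∀ s, 1 ≤ s → s < Q → s ∣ d) → ∀ x : ℕ → ℕ,
      ‖(Q : ℝ)⁻¹ • ∑ q ∈ Finset.Ico q0 (q0 + Q), aav U (x q) (d * q + 1) R f - aav U 0 1 J f‖ ≤ ε := by
  obtain ⟨p, hp, hpt⟩ := mean_erg U 1 f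
  rw [pow_one] at hp
  set h := f - p with hh
  have hht : Tendsto (fun J => aav U 0 1 J h) atTop (nhds 0) := by
    have : Tendsto (fun J => aav U 0 1 J f - p) atTop (nhds (p - p)) := hpt.sub_const p
    rw [sub_self] at this
    refine this.congr' ?_
    filter_upwards [eventually_ge_atTop 1] with J hJ
    rw [hh, aav_sub, aav_fix U 0 1 J hJ p hp]
  set B := ‖h‖ with hB
  have hB0 : 0 ≤ B := norm_nonneg _
  set η := (ε / 2) ^ 2 / 2 with hη
  have hη0 : 0 < η := by positivity
  obtain ⟨Q, hQ⟩ := exists_nat_gt (B ^ 2 / η)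
  have hQ0 : (0 : ℝ) < Q := lt_of_le_of_lt (by positivity) hQ
  have hQ1 : 1 ≤ Q := by exact_mod_cast hQ0
  set e := η / (6 * (B + 1)) with he
  have he0 : 0 < e := by positivity
  have heB : 3 * e * B ≤ η / 2 := by
    have : e * (6 * (B + 1)) = η := by rw [he]; field_simp
    nlinarith
  choose h' hfix hlim using fun s => mean_erg U s h
  have hJev : ∀ᶠ J in atTop, ∀ s ∈ Finset.range Q, ‖aav U 0 s J h - h' s‖ ≤ e := by
    rw [Filter.eventually_all_finset]
    intro s _
    have := (tendsto_iff_norm_sub_tendsto_zero.1 (hlim s)).eventually (gt_mem_nhds he0)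
    exact this.mono fun J hJ => hJ.le
  obtain ⟨J, hJ, hJ1⟩ := (hJev.and (eventually_ge_atTop 1)).exists
  have hRev1 : ∀ᶠ R in atTop, ‖aav U 0 1 R h‖ ≤ e := by
    have := (tendsto_zero_iff_norm_tendsto_zero.1 hht).eventually (gt_mem_nhds he0)
    exact this.mono fun J hJ => hJ.le
  have hRev2 : ∀ᶠ R : ℕ in atTop, (J : ℝ) * ((2 * (q0 + Q)) * (2 * B ^ 2 / R)) ≤ η / 2 := by
    have : Tendsto (fun R : ℕ => (J : ℝ) * ((2 * (q0 + Q)) * (2 * B ^ 2 / R))) atTop (nhds 0) := by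
      have h1 := tendsto_const_div_atTop_nhds_zero_nat (2 * B ^ 2)
      have h2 := (h1.const_mul (2 * ((q0 : ℝ) + Q))).const_mul (J : ℝ)
      simpa using h2
    exact (this.eventually (gt_mem_nhds (by positivity : 0 < η / 2))).mono fun _ h => h.le
  obtain ⟨R, ⟨hR1, hR2⟩, hR⟩ := ((hRev1.and hRev2).and (eventually_ge_atTop 1)).exists
  have hKev : ∀ᶠ K in atTop, ‖aav U 0 1 K f - p‖ ≤ ε / 2 := by
    have := (tendsto_iff_norm_sub_tendsto_zero.1 hpt).eventually (gt_mem_nhds (half_pos hε))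
    exact this.mono fun J hJ => hJ.le
  obtain ⟨K, hK, hK1⟩ := (hKev.and (eventually_ge_atTop 1)).exists
  refine ⟨Q, R, K, hQ1, hR, hK1, fun d hd x => ?_⟩
  have key : ∀ q q', q0 ≤ q → q < q' → q' < q0 + Q →
      inner ℝ (aav U (x q) (d * q + 1) R h) (aav U (x q') (d * q' + 1) R h) ≤ η := by
    intro q q' h1 h2 h3
    have hs : q' - q < Q := by omega
    have e1 : q' * (d * q + 1) = q * (d * q' + 1) + (q' - q) := by
      have : q' = q + (q' - q) := by omega
      generalize q' - q = s at *
      subst this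
      ring
    have p2 := pair_two U (x q) (x q') (d * q + 1) (d * q' + 1) R q q' (q' - q) J hJ1 e1 h
    have p3 := pair_three U (x q) d R q (q' - q) J (hd _ (by omega) hs) h (h' (q' - q)) e (hfix _)
      (hJ _ (Finset.mem_range.2 hs)) hR1
    have p4 : ‖aav U 0 (q' - q) J (aav U (x q) (d * q + 1) R h)‖ * ‖h‖ ≤ 3 * e * B := by gcongr
    have p5 : (J : ℝ) * ((q + q') * (2 * ‖h‖ ^ 2 / R)) ≤ (J : ℝ) * ((2 * (q0 + Q)) * (2 * B ^ 2 / R)) := by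
      have a1 : (q : ℝ) + q' ≤ 2 * (q0 + Q) := by
        have : q + q' ≤ 2 * (q0 + Q) := by omega
        exact_mod_cast this
      gcongr
    have := le_abs_self (inner ℝ (aav U (x q) (d * q + 1) R h) (aav U (x q') (d * q' + 1) R h))
    linarith
  have n1 := norm_sum_sq (Finset.Ico q0 (q0 + Q)) (fun q => aav U (x q) (d * q + 1) R h) B η hη0.le
    (fun q _ => aav_norm _ _ _ _ _) (by
      intro q hq q' hq' hne
      rw [Finset.mem_Ico] at hq hq'
      rcases lt_or_gt_of_ne hne with hl | hl
      · exact key q q' hq.1 hl hq'.2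
      · rw [real_inner_comm]; exact key q' q hq'.1 hl hq.2)
  rw [Nat.card_Ico, Nat.add_sub_cancel_left] at n1
  have n2 : ‖(Q : ℝ)⁻¹ • ∑ q ∈ Finset.Ico q0 (q0 + Q), aav U (x q) (d * q + 1) R h‖ ≤ ε / 2 := by
    rw [norm_smul, norm_inv, Real.norm_natCast]
    refine abs_le_of_sq_le_sq' ?_ (half_pos hε).le |>.2
    rw [mul_pow]
    have b1 : B ^ 2 ≤ Q * η := by
      rw [div_lt_iff₀ hη0] at hQ; exact hQ.le
    calc _ ≤ ((Q : ℝ)⁻¹) ^ 2 * (Q * B ^ 2 + Q ^ 2 * η) := by gcongr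
      _ ≤ ((Q : ℝ)⁻¹) ^ 2 * (Q * (Q * η) + Q ^ 2 * η) := by gcongr
      _ = 2 * η := by field_simp; ring
      _ = (ε / 2) ^ 2 := by rw [hη]; ring
  have e1 : (Q : ℝ)⁻¹ • ∑ q ∈ Finset.Ico q0 (q0 + Q), aav U (x q) (d * q + 1) R f =
      (Q : ℝ)⁻¹ • ∑ q ∈ Finset.Ico q0 (q0 + Q), aav U (x q) (d * q + 1) R h + p := by
    have : ∀ q, aav U (x q) (d * q + 1) R f = aav U (x q) (d * q + 1) R h + p := by
      intro q
      rw [hh, aav_sub, aav_fix U _ _ R hR p hp, sub_add_cancel]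
    simp only [this]
    rw [Finset.sum_add_distrib, smul_add, Finset.sum_const, Nat.card_Ico, Nat.add_sub_cancel_left,
      ← Nat.cast_smul_eq_nsmul ℝ, smul_smul, inv_mul_cancel₀ hQ0.ne', one_smul]
  rw [e1]
  have e2 : ∀ a b : H, a + p - b = a - (b - p) := fun a b => by abel
  rw [e2]
  refine (norm_sub_le _ _).trans ?_
  linarith

end HilbertTwo

end S14
end

section
namespace S14

lemma gns_pre {V : Type} [SeminormedAddCommGroup V] [InnerProductSpace ℝ V] (T : V →ₗᵢ[ℝ] V) :
    ∃ (H : Type) (_ : NormedAddCommGroup H) (_ : InnerProductSpace ℝ H) (_ : CompleteSpace H)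
      (U : H →ₗᵢ[ℝ] H) (φ : V →ₗ[ℝ] H), (∀ f g, inner ℝ (φ f) (φ g) = inner ℝ f g) ∧
      ∀ f, U (φ f) = φ (T f) := by
  let T' : UniformSpace.Completion V →L[ℝ] UniformSpace.Completion V :=
    T.toContinuousLinearMap.completion
  have hT : ∀ v : V, T' v = (T v : UniformSpace.Completion V) := fun v =>
    ContinuousLinearMap.completion_apply_coe _ _
  have hn : ∀ x, ‖T' x‖ = ‖x‖ := by
    intro x
    induction x using UniformSpace.Completion.induction_on with
    | hp => exact isClosed_eq (by fun_prop) (by fun_prop)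
    | ih v => rw [hT]; simp
  refine ⟨UniformSpace.Completion V, inferInstance, inferInstance, inferInstance,
    ⟨T'.toLinearMap, hn⟩, (UniformSpace.Completion.toComplₗᵢ (𝕜 := ℝ) (E := V)).toLinearMap,
    fun f g => ?_, fun f => ?_⟩
  · exact UniformSpace.Completion.inner_coe f g
  · exact hT f

lemma gns {V : Type} [AddCommGroup V] [Module ℝ V] (B : V →ₗ[ℝ] V →ₗ[ℝ] ℝ)
    (hs : ∀ f g, B f g = B g f) (hp : ∀ f, 0 ≤ B f f) (T : V →ₗ[ℝ] V)
    (hT : ∀ f, B (T f) (T f) = B f f) :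
    ∃ (H : Type) (_ : NormedAddCommGroup H) (_ : InnerProductSpace ℝ H) (_ : CompleteSpace H)
      (U : H →ₗᵢ[ℝ] H) (φ : V →ₗ[ℝ] H), (∀ f g, inner ℝ (φ f) (φ g) = B f g) ∧
      ∀ f, U (φ f) = φ (T f) := by
  let core : PreInnerProductSpace.Core ℝ V :=
    { inner := fun f g => B f g
      conj_inner_symm := fun x y => by simpa using hs y x
      re_inner_nonneg := fun x => by simpa using hp x
      add_left := fun x y z => by simp
      smul_left := fun x y r => by simp }
  let _ : SeminormedAddCommGroup V := @InnerProductSpace.Core.toSeminormedAddCommGroup ℝ V _ _ _ core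
  let _ : InnerProductSpace ℝ V := InnerProductSpace.ofCore core
  have hn : ∀ x : V, ‖x‖ = √ (B x x) := fun x => rfl
  let T' : V →ₗᵢ[ℝ] V := ⟨T, fun x => by rw [hn, hn, hT]⟩
  exact gns_pre T'

/-- lim of averages -/
lemma ulim_exists {V : Type} [AddCommGroup V] [Module ℝ V] (A : ℕ → V →ₗ[ℝ] ℝ)
    (hA : ∀ f, ∃ C, ∀ j, |A j f| ≤ C) :
    ∃ m : V →ₗ[ℝ] ℝ, ∀ f, Tendsto (fun j => A j f) (hyperfilter ℕ : Filter ℕ) (nhds (m f)) := by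
  have h : ∀ f, ∃ x, Tendsto (fun j => A j f) (hyperfilter ℕ : Filter ℕ) (nhds x) := by
    intro f
    obtain ⟨C, hC⟩ := hA f
    have hc : IsCompact (Set.Icc (-C) C) := isCompact_Icc
    obtain ⟨x, _, hx⟩ := hc.ultrafilter_le_nhds ((hyperfilter ℕ).map fun j => A j f) (by
      rw [Filter.le_principal_iff]
      exact Filter.mem_map.2 (Filter.mem_of_superset Filter.univ_mem fun j _ => abs_le.1 (hC j)))
    exact ⟨x, hx⟩
  choose m hm using h
  refine ⟨⟨⟨m, fun f g => ?_⟩, fun c f => ?_⟩, hm⟩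
  · refine tendsto_nhds_unique (hm (f + g)) ?_
    simpa using (hm f).add (hm g)
  · refine tendsto_nhds_unique (hm (c • f)) ?_
    simpa using (hm f).const_mul c

open scoped BoundedContinuousFunction

/-- shift by one -/
noncomputable def sh : (ℤ →ᵇ ℝ) →ₗ[ℝ] (ℤ →ᵇ ℝ) where
  toFun f := f.compContinuous ⟨fun z => z - 1, by fun_prop⟩
  map_add' f g := by ext; simp
  map_smul' c f := by ext; simp

lemma sh_apply (f : ℤ →ᵇ ℝ) (z : ℤ) : sh f z = f (z - 1) := rfl

/-- indicator as bounded function -/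
noncomputable def bi (A : Set ℤ) : ℤ →ᵇ ℝ :=
  BoundedContinuousFunction.ofNormedAddCommGroupDiscrete (fun z => ind (z ∈ A)) 1 fun z => by
    rw [Real.norm_eq_abs, abs_of_nonneg (ind_nonneg _)]; exact ind_le_one _

lemma bi_apply (A : Set ℤ) (z : ℤ) : bi A z = ind (z ∈ A) := rfl

/-- average over an interval of integers -/
noncomputable def iav (M N : ℕ) : (ℤ →ᵇ ℝ) →ₗ[ℝ] ℝ where
  toFun f := ((N - M : ℕ) + 1 : ℝ)⁻¹ * ∑ z ∈ Finset.Icc M N, f (z : ℤ)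
  map_add' f g := by simp [Finset.sum_add_distrib, mul_add]
  map_smul' c f := by simp [← Finset.mul_sum]; ring

lemma iav_apply (M N : ℕ) (f) : iav M N f = ((N - M : ℕ) + 1 : ℝ)⁻¹ * ∑ z ∈ Finset.Icc M N, f (z : ℤ) := rfl

lemma iav_bd (M N : ℕ) (h : M ≤ N) (f : ℤ →ᵇ ℝ) : |iav M N f| ≤ ‖f‖ := by
  rw [iav_apply, abs_mul, abs_of_pos (by positivity)]
  have : |∑ z ∈ Finset.Icc M N, f (z : ℤ)| ≤ ((N - M : ℕ) + 1 : ℝ) * ‖f‖ := by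
    refine (Finset.abs_sum_le_sum_abs _ _).trans ?_
    have hh : ∀ z ∈ Finset.Icc M N, |f (z : ℤ)| ≤ ‖f‖ := fun z _ => f.norm_coe_le_norm (z : ℤ)
    refine (Finset.sum_le_sum hh).trans (le_of_eq ?_)
    rw [Finset.sum_const, nsmul_eq_mul, Nat.card_Icc, show N + 1 - M = N - M + 1 by omega]
    push_cast
    ring
  calc _ ≤ ((N - M : ℕ) + 1 : ℝ)⁻¹ * (((N - M : ℕ) + 1 : ℝ) * ‖f‖) := by gcongr
    _ = ‖f‖ := by field_simp

lemma iav_sh (M N : ℕ) (h : M ≤ N) (f : ℤ →ᵇ ℝ) : |iav M N (sh f) - iav M N f| ≤ ((N - M : ℕ) + 1 : ℝ)⁻¹ * (2 * ‖f‖) := by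
  rw [iav_apply, iav_apply, ← mul_sub, abs_mul, abs_of_pos (by positivity), ← Finset.sum_sub_distrib]
  gcongr
  have : ∀ z : ℕ, sh f (z : ℤ) - f (z : ℤ) = (fun n : ℕ => - f ((n : ℤ) - 1)) (z + 1) - (fun n : ℕ => - f ((n : ℤ) - 1)) z := by
    intro z
    simp only [sh_apply]
    push_cast
    rw [add_sub_cancel_right]
    ring
  rw [Finset.sum_congr rfl fun z _ => this z, ← Finset.Ico_add_one_right_eq_Icc, Finset.sum_Ico_sub (fun n : ℕ => - f ((n : ℤ) - 1)) (show M ≤ N + 1 by omega)]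
  have h1 := f.norm_coe_le_norm (((N + 1 : ℕ) : ℤ) - 1)
  have h2 := f.norm_coe_le_norm ((M : ℤ) - 1)
  rw [Real.norm_eq_abs, abs_le] at h1 h2
  rw [abs_le]
  constructor <;> linarith

theorem mean_exists (E : Set ℕ) (δ : ℝ) (hδ : 0 < δ) (M N : ℕ → ℕ) (h1 : ∀ j, 1 ≤ M j ∧ M j ≤ N j)
    (h2 : Tendsto (fun j => N j - M j) atTop atTop)
    (h3 : ∀ j, δ * ((N j : ℝ) - (M j : ℝ)) ≤ (Nat.card ↥(E ∩ Set.Icc (M j) (N j)) : ℝ)) :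
    ∃ m : (ℤ →ᵇ ℝ) →ₗ[ℝ] ℝ, (∀ f, (∀ z, 0 ≤ f z) → 0 ≤ m f) ∧ m 1 = 1 ∧ (∀ f, m (sh f) = m f) ∧
      δ / 2 ≤ m (bi {z : ℤ | 1 ≤ z ∧ z.toNat ∈ E}) := by
  obtain ⟨m, hm⟩ := ulim_exists (fun j => iav (M j) (N j)) fun f => ⟨‖f‖, fun j => iav_bd _ _ (h1 j).2 f⟩
  have hle : (hyperfilter ℕ : Filter ℕ) ≤ atTop := by
    rw [← Nat.cofinite_eq_atTop]; exact hyperfilter_le_cofinite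
  refine ⟨m, fun f hf => ?_, ?_, fun f => ?_, ?_⟩
  · refine ge_of_tendsto' (hm f) fun j => ?_
    rw [iav_apply]
    exact mul_nonneg (by positivity) (Finset.sum_nonneg fun z _ => hf z)
  · refine tendsto_nhds_unique (hm 1) ?_
    have : ∀ j, iav (M j) (N j) 1 = 1 := by
      intro j
      rw [iav_apply]
      have := (h1 j).2
      simp only [BoundedContinuousFunction.coe_one, Pi.one_apply, Finset.sum_const, nsmul_eq_mul, Nat.card_Icc, mul_one]
      rw [show N j + 1 - M j = N j - M j + 1 by omega]
      push_cast
      field_simp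
    simp only [this]
    exact tendsto_const_nhds
  · have e1 : Tendsto (fun j => iav (M j) (N j) (sh f) - iav (M j) (N j) f) (hyperfilter ℕ : Filter ℕ)
        (nhds (m (sh f) - m f)) := (hm _).sub (hm _)
    have e2 : Tendsto (fun j => iav (M j) (N j) (sh f) - iav (M j) (N j) f) (hyperfilter ℕ : Filter ℕ)
        (nhds 0) := by
      refine Tendsto.mono_left ?_ hle
      refine squeeze_zero_norm (fun j => iav_sh _ _ (h1 j).2 f) ?_
      have t1 : Tendsto (fun j => (((N j - M j : ℕ) : ℝ) + 1)⁻¹) atTop (nhds 0) := by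
        apply tendsto_inv_atTop_zero.comp
        exact tendsto_atTop_add_const_right _ _ (tendsto_natCast_atTop_atTop.comp h2)
      simpa using t1.mul_const (2 * ‖f‖)
    have := tendsto_nhds_unique e1 e2
    linarith
  · refine ge_of_tendsto (hm _) (hle ?_)
    filter_upwards [h2.eventually_ge_atTop 1] with j hj
    rw [iav_apply]
    have hM := (h1 j).1
    have hMN := (h1 j).2
    have hc : ∑ z ∈ Finset.Icc (M j) (N j), bi {z : ℤ | 1 ≤ z ∧ z.toNat ∈ E} (z : ℤ) =
        (Nat.card ↥(E ∩ Set.Icc (M j) (N j)) : ℝ) := by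
      classical
      have e : E ∩ Set.Icc (M j) (N j) = ((Finset.Icc (M j) (N j)).filter (fun z => z ∈ E) : Finset ℕ) := by
        ext z; simp [and_comm]
      rw [e, Nat.card_coe_set_eq, Set.ncard_coe_finset, Finset.card_filter]
      push_cast
      refine Finset.sum_congr rfl fun z hz => ?_
      rw [Finset.mem_Icc] at hz
      rw [bi_apply]
      unfold ind
      have : ((z : ℤ) ∈ {z : ℤ | 1 ≤ z ∧ z.toNat ∈ E}) ↔ z ∈ E := by
        simp only [Set.mem_ofPred_eq, Int.toNat_natCast]
        constructor
        · exact fun h => h.2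
        · exact fun h => ⟨by omega, h⟩
      simp only [this]
    rw [hc]
    have hb := h3 j
    have : ((N j - M j : ℕ) : ℝ) = (N j : ℝ) - M j := by push_cast [hMN]; ring
    rw [← this] at hb
    have hj' : (1 : ℝ) ≤ ((N j - M j : ℕ) : ℝ) := by exact_mod_cast hj
    rw [← div_eq_inv_mul, le_div_iff₀ (by positivity)]
    nlinarith

end S14
end

section
namespace S14

open scoped BoundedContinuousFunction

/-- invariant mean -/
structure IsMean (m : (ℤ →ᵇ ℝ) →ₗ[ℝ] ℝ) : Prop where
  pos : ∀ f, (∀ z, 0 ≤ f z) → 0 ≤ m f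
  one : m 1 = 1
  shift : ∀ f, m (sh f) = m f

variable {m : (ℤ →ᵇ ℝ) →ₗ[ℝ] ℝ}

lemma IsMean.mono (hm : IsMean m) {f g : ℤ →ᵇ ℝ} (h : ∀ z, f z ≤ g z) : m f ≤ m g := by
  have := hm.pos (g - f) fun z => by simpa using h z
  rw [map_sub] at this
  linarith

lemma IsMean.const (hm : IsMean m) (c : ℝ) : m (c • 1) = c := by
  rw [map_smul, hm.one, smul_eq_mul, mul_one]

lemma IsMean.translate (hm : IsMean m) (A : Set ℤ) (t : ℕ) : m (bi {n | n + (t : ℤ) ∈ A}) = m (bi A) := by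
  induction t with
  | zero => simp
  | succ t ih =>
    rw [← ih, ← hm.shift]
    congr 1
    ext z
    rw [sh_apply, bi_apply, bi_apply]
    simp only [Set.mem_ofPred_eq]
    push_cast
    congr 2
    ring

lemma sh_pow_apply (p : ℕ) (f : ℤ →ᵇ ℝ) (z : ℤ) : (sh ^ p) f z = f (z - p) := by
  induction p generalizing z with
  | zero => simp
  | succ p ih =>
    rw [pow_succ', Module.End.mul_apply, sh_apply, ih]
    push_cast
    congr 1
    ring

lemma IsMean.shift_pow (hm : IsMean m) (f : ℤ →ᵇ ℝ) (p : ℕ) : m ((sh ^ p) f) = m f := by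
  induction p with
  | zero => simp
  | succ p ih => rw [pow_succ', Module.End.mul_apply, hm.shift, ih]

lemma bsum_apply {κ : Type*} (s : Finset κ) (g : κ → ℤ →ᵇ ℝ) (z : ℤ) : (∑ i ∈ s, g i) z = ∑ i ∈ s, g i z := by
  simp

/-- points with many predecessors -/
def rich (E : Set ℤ) (c : ℝ) (J : ℕ) : Set ℤ :=
  {n | n ∈ E ∧ c * J ≤ ∑ j ∈ Finset.range J, ind (n - (j : ℤ) ∈ E)}

lemma rich_sum (E : Set ℤ) (c : ℝ) (hc : 0 ≤ c) (J : ℕ) (z : ℤ) :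
    ∑ j ∈ Finset.range J, ind (z - (j : ℤ) ∈ E \ rich E c J) ≤ c * J := by
  classical
  by_cases h : ∃ j, j < J ∧ z - (j : ℤ) ∈ E \ rich E c J
  · set j0 := Nat.find h with hj0
    obtain ⟨h1, h2⟩ := Nat.find_spec h
    rw [← hj0] at h1 h2
    have h3 : ∑ j ∈ Finset.range J, ind (z - (j0 : ℤ) - (j : ℤ) ∈ E) < c * J := by
      by_contra hcon
      exact h2.2 ⟨h2.1, not_lt.1 hcon⟩
    refine le_trans ?_ h3.le
    have e1 : ∑ j ∈ Finset.range J, ind (z - (j : ℤ) ∈ E \ rich E c J) =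
        ∑ j ∈ Finset.Ico j0 J, ind (z - (j : ℤ) ∈ E \ rich E c J) := by
      rw [Finset.range_eq_Ico, ← Finset.sum_Ico_consecutive _ (Nat.zero_le j0) h1.le]
      rw [Finset.sum_eq_zero, zero_add]
      intro j hj
      rw [Finset.mem_Ico] at hj
      apply ind_false
      intro hh
      exact Nat.find_min h hj.2 ⟨by omega, hh⟩
    rw [e1, Finset.sum_Ico_eq_sum_range]
    calc _ ≤ ∑ j ∈ Finset.range (J - j0), ind (z - (j0 : ℤ) - (j : ℤ) ∈ E) := by
          refine Finset.sum_le_sum fun j _ => ind_mono fun hh => ?_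
          have := hh.1
          push_cast at this
          rwa [← sub_sub] at this
      _ ≤ _ := by
          refine Finset.sum_le_sum_of_subset_of_nonneg ?_ fun _ _ _ => ind_nonneg _
          exact Finset.range_subset_range.2 (by omega)
  · rw [Finset.sum_eq_zero]
    · positivity
    · intro j hj
      apply ind_false
      intro hh
      exact h ⟨j, Finset.mem_range.1 hj, hh⟩

lemma IsMean.rich (hm : IsMean m) (E : Set ℤ) (δ : ℝ) (hδ : 0 < δ) (hE : δ ≤ m (bi E)) (J : ℕ) (hJ : 1 ≤ J) :
    δ / 2 ≤ m (bi (rich E (δ / 2) J)) := by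
  have h1 : m (bi E) ≤ m (bi (S14.rich E (δ / 2) J)) + m (bi (E \ S14.rich E (δ / 2) J)) := by
    rw [← map_add]
    apply hm.mono
    intro z
    simp only [BoundedContinuousFunction.coe_add, Pi.add_apply, bi_apply]
    by_cases h : z ∈ E
    · by_cases h' : z ∈ S14.rich E (δ / 2) J
      · rw [ind_true h, ind_true h']; linarith [ind_nonneg (z ∈ E \ S14.rich E (δ / 2) J)]
      · rw [ind_true h, ind_true (show z ∈ E \ S14.rich E (δ / 2) J from ⟨h, h'⟩)]
        linarith [ind_nonneg (z ∈ S14.rich E (δ / 2) J)]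
    · rw [ind_false h]
      exact add_nonneg (ind_nonneg _) (ind_nonneg _)
  have h2 : m (∑ j ∈ Finset.range J, (sh ^ j) (bi (E \ S14.rich E (δ / 2) J))) ≤ δ / 2 * J := by
    rw [← hm.const (δ / 2 * J)]
    apply hm.mono
    intro z
    rw [bsum_apply]
    simp only [sh_pow_apply, bi_apply]
    refine (rich_sum E (δ / 2) (by positivity) J z).trans (le_of_eq ?_)
    simp
  rw [map_sum] at h2
  simp only [hm.shift_pow, Finset.sum_const, Finset.card_range, nsmul_eq_mul] at h2
  have hJ' : (0 : ℝ) < J := by exact_mod_cast hJ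
  have h3 : m (bi (E \ S14.rich E (δ / 2) J)) ≤ δ / 2 := by
    rw [mul_comm] at h2
    exact le_of_mul_le_mul_right h2 hJ'
  linarith

end S14
end

section
namespace S14

open scoped BoundedContinuousFunction

variable {m : (ℤ →ᵇ ℝ) →ₗ[ℝ] ℝ}

lemma IsMean.bi_le_one (hm : IsMean m) (A : Set ℤ) : m (bi A) ≤ 1 := by
  rw [← hm.one]
  exact hm.mono fun z => ind_le_one (z ∈ A)

lemma IsMean.empty (A : Set ℤ) (h : ∀ z, z ∉ A) : m (bi A) = 0 := by
  have : bi A = 0 := by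
    ext z; simpa [bi_apply] using ind_false (h z)
  rw [this, map_zero]

lemma IsMean.dhj (hm : IsMean m) (k : ℕ) (δ : ℝ) (hδ : 0 < δ) :
    ∃ (ι : Type) (_ : Fintype ι) (c : ℝ), 0 < c ∧ ∀ A : Set ℤ, δ ≤ m (bi A) → ∀ s : ι → ℕ,
      ∃ S : Finset ι, S.Nonempty ∧ c ≤ m (bi {n | ∀ i, i ≤ k → n + ((i * ∑ j ∈ S, s j : ℕ) : ℤ) ∈ A}) := by
  classical
  obtain ⟨ι, hfin, hG⟩ := dhj_all k (δ / 2) (half_pos hδ)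
  have hι := Fintype.ofFinite ι
  refine ⟨ι, hι, (δ / 2) / Fintype.card (ι → Option (Fin (k + 1))), ?_, fun A hA s => ?_⟩
  · have : 0 < Fintype.card (ι → Option (Fin (k + 1))) := Fintype.card_pos
    positivity
  set W := ι → Fin (k + 1) with hW
  set F : ℤ → ℝ := fun n => av (fun w : W => ind (n + ((∑ i, (w i : ℕ) * s i : ℕ) : ℤ) ∈ A)) with hF
  set Gs : Set ℤ := {n | δ / 2 ≤ F n} with hGs
  have h1 : δ / 2 ≤ m (bi Gs) := by
    have a1 : m ((Fintype.card W : ℝ)⁻¹ • ∑ w : W, bi {n | n + ((∑ i, (w i : ℕ) * s i : ℕ) : ℤ) ∈ A}) ≤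
        m (bi Gs + (δ / 2) • 1) := by
      apply hm.mono
      intro z
      simp only [BoundedContinuousFunction.coe_smul, BoundedContinuousFunction.coe_add, Pi.add_apply,
        bsum_apply, bi_apply, BoundedContinuousFunction.coe_one, Pi.one_apply, smul_eq_mul, mul_one]
      have e : (Fintype.card W : ℝ)⁻¹ * ∑ w : W, ind (z ∈ {n : ℤ | n + ((∑ i, (w i : ℕ) * s i : ℕ) : ℤ) ∈ A}) = F z := by
        rw [hF]
        simp only
        rw [av_eq, div_eq_inv_mul]
        rfl
      rw [e]
      by_cases hz : z ∈ Gs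
      · rw [ind_true hz]
        have : F z ≤ 1 := av_le_const zero_le_one fun _ => ind_le_one _
        linarith
      · rw [ind_false hz]
        have : F z < δ / 2 := not_le.1 hz
        linarith
    rw [map_add, hm.const, map_smul, map_sum] at a1
    simp only [hm.translate] at a1
    rw [Finset.sum_const, Finset.card_univ, nsmul_eq_mul, smul_eq_mul, ← mul_assoc, inv_mul_cancel₀, one_mul] at a1
    · linarith
    · exact_mod_cast Fintype.card_ne_zero
  set P : (ι → Option (Fin (k + 1))) → Set ℤ := fun σ =>
    {n | (∃ i, σ i = none) ∧ ∀ a : Fin (k + 1), n + ((∑ i, (((σ i).getD a : Fin (k + 1)) : ℕ) * s i : ℕ) : ℤ) ∈ A} with hP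
  have h2 : m (bi Gs) ≤ ∑ σ, m (bi (P σ)) := by
    rw [← map_sum]
    apply hm.mono
    intro z
    rw [bsum_apply, bi_apply]
    by_cases hz : z ∈ Gs
    · obtain ⟨σ, hσ⟩ := hG {w | z + ((∑ i, (w i : ℕ) * s i : ℕ) : ℤ) ∈ A} hz
      rw [ind_true hz]
      refine le_trans ?_ (Finset.single_le_sum (f := fun σ => bi (P σ) z) (fun _ _ => ind_nonneg _) (Finset.mem_univ σ))
      simp only [bi_apply]
      rw [ind_true]
      exact hσ
    · rw [ind_false hz]
      exact Finset.sum_nonneg fun _ _ => ind_nonneg _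
  have h3 : ∃ σ, (δ / 2) / Fintype.card (ι → Option (Fin (k + 1))) ≤ m (bi (P σ)) := by
    by_contra hcon
    push Not at hcon
    have := Finset.sum_lt_sum_of_nonempty (Finset.univ_nonempty (α := ι → Option (Fin (k + 1)))) fun σ _ => hcon σ
    rw [Finset.sum_const, Finset.card_univ, nsmul_eq_mul, mul_div_cancel₀] at this
    · linarith
    · exact_mod_cast Fintype.card_ne_zero
  obtain ⟨σ, hσ⟩ := h3
  have hpos : 0 < (δ / 2) / Fintype.card (ι → Option (Fin (k + 1))) := by
    have : 0 < Fintype.card (ι → Option (Fin (k + 1))) := Fintype.card_pos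
    positivity
  have hnone : ∃ i, σ i = none := by
    by_contra hcon
    have := IsMean.empty (m := m) (P σ) (fun z hz => hcon hz.1)
    linarith
  obtain ⟨i0, hi0⟩ := hnone
  refine ⟨Finset.univ.filter (fun i => σ i = none), ⟨i0, by simp [hi0]⟩, ?_⟩
  set S := Finset.univ.filter (fun i => σ i = none) with hS
  set t := ∑ i ∈ Finset.univ.filter (fun i => ¬ σ i = none), (((σ i).getD 0 : Fin (k + 1)) : ℕ) * s i with ht
  rw [← hm.translate _ t]
  refine hσ.trans (hm.mono fun z => ?_)
  rw [bi_apply, bi_apply]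
  apply ind_mono
  rintro ⟨_, hz⟩ i hi
  have := hz ⟨i, by omega⟩
  have e : ∑ i_1, (((σ i_1).getD ⟨i, by omega⟩ : Fin (k + 1)) : ℕ) * s i_1 = t + i * ∑ j ∈ S, s j := by
    rw [← Finset.sum_filter_add_sum_filter_not Finset.univ (fun i => σ i = none), add_comm]
    congr 1
    · apply Finset.sum_congr rfl
      intro j hj
      rw [Finset.mem_filter] at hj
      obtain ⟨v, hv⟩ := Option.ne_none_iff_exists'.1 hj.2
      rw [hv]; rfl
    · rw [Finset.mul_sum]
      apply Finset.sum_congr rfl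
      intro j hj
      rw [Finset.mem_filter] at hj
      rw [hj.2]; rfl
  rw [e] at this
  push_cast at this ⊢
  rwa [← add_assoc] at this

theorem IsMean.main (hm : IsMean m) (E : Set ℤ) (δ : ℝ) (hδ : 0 < δ) (hE : δ ≤ m (bi E)) (k q0 : ℕ) :
    ∃ (ι : Type) (_ : Fintype ι) (Q R : ℕ), ∀ s : ι → ℕ, ∃ S : Finset ι, S.Nonempty ∧
      ∀ d, d = ∑ j ∈ S, s j → (∀ t, 1 ≤ t → t < Q → t ∣ d) → ∀ x : ℕ → ℕ,
      ∃ q r : ℕ, ∃ n : ℤ, q0 ≤ q ∧ q < q0 + Q ∧ r < R ∧ n - ((x q + (d * q + 1) * r : ℕ) : ℤ) ∈ E ∧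
        ∀ i, i ≤ k → n + ((i * d : ℕ) : ℤ) ∈ E := by
  obtain ⟨ι, hι, c, hc, hdhj⟩ := hm.dhj k (δ / 2) (half_pos hδ)
  obtain ⟨H, i1, i2, i3, U, φ, hφ, hU⟩ := gns
    (LinearMap.mk₂ ℝ (fun f g : ℤ →ᵇ ℝ => m (f * g)) (fun f f' g => by rw [add_mul, map_add])
      (fun c f g => by rw [smul_mul_assoc, map_smul]) (fun f g g' => by rw [mul_add, map_add])
      (fun c f g => by rw [mul_smul_comm, map_smul]))
    (fun f g => by simp only [LinearMap.mk₂_apply, mul_comm])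
    (fun f => hm.pos _ fun z => by simpa using mul_self_nonneg (f z)) sh
    (fun f => hm.shift (f * f))
  simp only [LinearMap.mk₂_apply] at hφ
  have hUp : ∀ p f, (U ^ p) (φ f) = φ ((sh ^ p) f) := by
    intro p f
    induction p with
    | zero => simp
    | succ p ih =>
      rw [pow_succ', pow_succ', Module.End.mul_apply, ← hU, ← ih]; rfl
  obtain ⟨Q, R, J, hQ, hR, hJ, hmain⟩ := hilbert_main U (φ (bi E)) (δ / 4 * c) (by positivity) q0
  refine ⟨ι, hι, Q, R, fun s => ?_⟩
  obtain ⟨S, hS, hcS⟩ := hdhj (S14.rich E (δ / 2) J) (hm.rich E δ hδ hE J hJ) s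
  refine ⟨S, hS, fun d hd hdiv x => ?_⟩
  rw [← hd] at hcS
  set B : Set ℤ := {n | ∀ i, i ≤ k → n + ((i * d : ℕ) : ℤ) ∈ S14.rich E (δ / 2) J} with hB
  by_contra hcon
  have hI : ∀ x D R, inner ℝ (aav U x D R (φ (bi E))) (φ (bi B)) =
      (R : ℝ)⁻¹ * ∑ r ∈ Finset.range R, m ((sh ^ (x + D * r)) (bi E) * bi B) := by
    intro x D R
    unfold aav
    rw [real_inner_smul_left, sum_inner]
    simp only [hUp, hφ]
  have hzero : ∀ q ∈ Finset.Ico q0 (q0 + Q), inner ℝ (aav U (x q) (d * q + 1) R (φ (bi E))) (φ (bi B)) = 0 := by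
    intro q hq
    rw [Finset.mem_Ico] at hq
    rw [hI, Finset.sum_eq_zero, mul_zero]
    intro r hr
    have : (sh ^ (x q + (d * q + 1) * r)) (bi E) * bi B = 0 := by
      ext z
      simp only [BoundedContinuousFunction.coe_mul, Pi.mul_apply, sh_pow_apply, bi_apply,
        BoundedContinuousFunction.coe_zero, Pi.zero_apply]
      by_cases hz : z ∈ B
      · rw [ind_false, zero_mul]
        intro hh
        exact hcon ⟨q, r, z, hq.1, hq.2, Finset.mem_range.1 hr, hh, fun i hi => (hz i hi).1⟩
      · rw [ind_false hz, mul_zero]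
    rw [this, map_zero]
  have hbig : δ / 2 * c ≤ inner ℝ (aav U 0 1 J (φ (bi E))) (φ (bi B)) := by
    have hJ' : (0 : ℝ) < J := by exact_mod_cast hJ
    rw [hI, ← map_sum, ← Finset.sum_mul]
    have a1 : m ((δ / 2 * J) • bi B) ≤ m ((∑ r ∈ Finset.range J, (sh ^ (0 + 1 * r)) (bi E)) * bi B) := by
      apply hm.mono
      intro z
      simp only [BoundedContinuousFunction.coe_mul, BoundedContinuousFunction.coe_smul, Pi.mul_apply, sh_pow_apply, bi_apply,
        bsum_apply, zero_add, one_mul, smul_eq_mul]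
      by_cases hz : z ∈ B
      · have := (hz 0 (Nat.zero_le k)).2
        simp only [zero_mul, Nat.cast_zero, add_zero] at this
        exact mul_le_mul_of_nonneg_right this (ind_nonneg _)
      · rw [ind_false hz, mul_zero, mul_zero]
    rw [map_smul, smul_eq_mul] at a1
    calc δ / 2 * c ≤ δ / 2 * m (bi B) := by gcongr
      _ = (J : ℝ)⁻¹ * (δ / 2 * J * m (bi B)) := by field_simp
      _ ≤ _ := by gcongr
  have hn : ‖φ (bi B)‖ ≤ 1 := by
    have : ‖φ (bi B)‖ ^ 2 ≤ 1 := by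
      rw [← real_inner_self_eq_norm_sq, hφ]
      have e : bi B * bi B = bi B := by
        ext z
        simp only [BoundedContinuousFunction.coe_mul, Pi.mul_apply, bi_apply]
        unfold ind; split_ifs <;> norm_num
      rw [e]
      exact hm.bi_le_one B
    have := norm_nonneg (φ (bi B))
    nlinarith
  have h1 := hmain d hdiv x
  have h2 := abs_real_inner_le_norm ((Q : ℝ)⁻¹ • ∑ q ∈ Finset.Ico q0 (q0 + Q), aav U (x q) (d * q + 1) R (φ (bi E)) - aav U 0 1 J (φ (bi E))) (φ (bi B))
  rw [inner_sub_left, real_inner_smul_left, sum_inner, Finset.sum_eq_zero hzero, mul_zero, zero_sub, abs_neg] at h2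
  have h3 := le_abs_self (inner ℝ (aav U 0 1 J (φ (bi E))) (φ (bi B)))
  have h4 : ‖(Q : ℝ)⁻¹ • ∑ q ∈ Finset.Ico q0 (q0 + Q), aav U (x q) (d * q + 1) R (φ (bi E)) - aav U 0 1 J (φ (bi E))‖ * ‖φ (bi B)‖ ≤ (δ / 4 * c) * 1 := by
    gcongr
  have : 0 < δ * c := by positivity
  linarith

end S14
end

section
namespace S14

lemma cubic_pos (c3 c2 c1 c0 : ℤ) (h : 1 ≤ c3) :
    ∀ᶠ u : ℕ in atTop, 0 < c3 * (u : ℤ) ^ 3 + c2 * (u : ℤ) ^ 2 + c1 * u + c0 := by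
  filter_upwards [eventually_ge_atTop (c2.natAbs + c1.natAbs + c0.natAbs + 1)] with u hu
  have hu' : |c2| + |c1| + |c0| + 1 ≤ (u : ℤ) := by
    rw [← Int.natCast_natAbs, ← Int.natCast_natAbs, ← Int.natCast_natAbs]
    exact_mod_cast hu
  have a2 := neg_abs_le c2
  have a1 := neg_abs_le c1
  have a0 := neg_abs_le c0
  have b2 := abs_nonneg c2
  have b1 := abs_nonneg c1
  have b0 := abs_nonneg c0
  generalize (u : ℤ) = v at *
  have hv : 1 ≤ v := by linarith
  have hv2 : v ≤ v ^ 2 := by nlinarith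
  have e3 : v ^ 3 = v * v ^ 2 := by ring
  have h1 : v ^ 3 ≤ c3 * v ^ 3 := le_mul_of_one_le_left (by positivity) h
  have h2 : (|c2| + |c1| + |c0| + 1) * v ^ 2 ≤ v ^ 3 := by
    rw [e3]; gcongr
  have h3 : - |c2| * v ^ 2 ≤ c2 * v ^ 2 := by gcongr
  have h4 : - |c1| * v ≤ c1 * v := by gcongr
  have h5 : |c1| * v ≤ |c1| * v ^ 2 := by gcongr
  have h6 : |c0| * 1 ≤ |c0| * v ^ 2 := by gcongr; linarith
  nlinarith

lemma floor_three (x Y : ℕ) (h1 : Y ^ 2 ≤ x ^ 3) (h2 : x ^ 3 < (Y + 1) ^ 2) :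
    ⌊(x : ℝ) ^ ((3 : ℝ) / 2)⌋₊ = Y := by
  have e : (x : ℝ) ^ ((3 : ℝ) / 2) = √((x : ℝ) ^ 3) := by
    rw [Real.sqrt_eq_rpow, ← Real.rpow_natCast, ← Real.rpow_mul (by positivity)]
    norm_num
  rw [e, Nat.floor_eq_iff (by positivity)]
  constructor
  · apply Real.le_sqrt_of_sq_le
    exact_mod_cast h1
  · rw [Real.sqrt_lt' (by positivity)]
    exact_mod_cast h2

lemma arith_one (q r i : ℕ) (hi : i + 1 < q) : ∀ᶠ u : ℕ in atTop,
    ⌊((36 * q ^ 4 * u ^ 2 + 8 * q * u + 1 + q * r + i : ℕ) : ℝ) ^ ((3 : ℝ) / 2)⌋₊ =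
      216 * q ^ 6 * u ^ 3 + 72 * q ^ 3 * u ^ 2 + 4 * u + (q * r + i + 1) * (9 * q ^ 2 * u) + r := by
  have hq : (1 : ℤ) ≤ q := by exact_mod_cast (by omega : 1 ≤ q)
  have hi' : (i : ℤ) + 1 + 1 ≤ q := by exact_mod_cast hi
  have hi0 : (0 : ℤ) ≤ i := by positivity
  have p3 : (1 : ℤ) ≤ (q : ℤ) ^ 3 := one_le_pow₀ hq
  have p53 : (q : ℤ) ^ 3 ≤ (q : ℤ) ^ 5 := pow_le_pow_right₀ hq (by norm_num)
  have L1 := cubic_pos (432 * (q : ℤ) ^ 5 * (i + 1) - 64 * (q : ℤ) ^ 3)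
    (192 * q ^ 2 * (q * r + i + 1) + 108 * q ^ 4 * (q * r + i + 1) ^ 2 - (4 + 9 * q ^ 2 * (q * r + i + 1)) ^ 2 - 144 * q ^ 3 * r)
    (24 * q * (q * r + i + 1) ^ 2 - 2 * (4 + 9 * q ^ 2 * (q * r + i + 1)) * r)
    ((q * r + i + 1) ^ 3 - r ^ 2) (by nlinarith)
  have L2 := cubic_pos (432 * (q : ℤ) ^ 6 - (432 * (q : ℤ) ^ 5 * (i + 1) - 64 * (q : ℤ) ^ 3))
    (144 * q ^ 3 - (192 * q ^ 2 * (q * r + i + 1) + 108 * q ^ 4 * (q * r + i + 1) ^ 2 - (4 + 9 * q ^ 2 * (q * r + i + 1)) ^ 2 - 144 * q ^ 3 * r))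
    (2 * (4 + 9 * q ^ 2 * (q * r + i + 1)) - (24 * q * (q * r + i + 1) ^ 2 - 2 * (4 + 9 * q ^ 2 * (q * r + i + 1)) * r))
    (2 * r + 1 - ((q * r + i + 1) ^ 3 - r ^ 2)) (by
      have : (q : ℤ) ^ 6 = q * q ^ 5 := by ring
      have : (q : ℤ) ^ 5 * (i + 1) ≤ (q : ℤ) ^ 6 := by rw [this, mul_comm]; gcongr; linarith
      linarith)
  filter_upwards [L1, L2] with u h1 h2
  apply floor_three
  · zify
    refine le_of_sub_nonneg (h1.le.trans (le_of_eq ?_))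
    ring
  · zify
    refine lt_of_sub_pos (h2.trans_le (le_of_eq ?_))
    ring

lemma arith_all (k q1 R : ℕ) : ∃ u0, ∀ u, u0 ≤ u → ∀ q, k + 1 < q → q < q1 → ∀ r, r < R → ∀ i, i ≤ k →
    ⌊((36 * q ^ 4 * u ^ 2 + 8 * q * u + 1 + q * r + i : ℕ) : ℝ) ^ ((3 : ℝ) / 2)⌋₊ =
      216 * q ^ 6 * u ^ 3 + 72 * q ^ 3 * u ^ 2 + 4 * u + (q * r + i + 1) * (9 * q ^ 2 * u) + r := by
  have : ∀ᶠ u : ℕ in atTop, ∀ q ∈ Finset.range q1, ∀ r ∈ Finset.range R, ∀ i ∈ Finset.range (k + 1), k + 1 < q →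
    ⌊((36 * q ^ 4 * u ^ 2 + 8 * q * u + 1 + q * r + i : ℕ) : ℝ) ^ ((3 : ℝ) / 2)⌋₊ =
      216 * q ^ 6 * u ^ 3 + 72 * q ^ 3 * u ^ 2 + 4 * u + (q * r + i + 1) * (9 * q ^ 2 * u) + r := by
    simp only [Filter.eventually_all_finset]
    intro q _ r _ i hi
    rw [Finset.mem_range] at hi
    by_cases hq : k + 1 < q
    · exact (arith_one q r i (by omega)).mono fun u hu _ => hu
    · exact Eventually.of_forall fun u h => absurd h hq
  obtain ⟨u0, hu0⟩ := eventually_atTop.1 this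
  refine ⟨u0, fun u hu q h1 h2 r hr i hi => ?_⟩
  exact hu0 u hu q (Finset.mem_range.2 h2) r (Finset.mem_range.2 hr) i (Finset.mem_range.2 (by omega)) h1

lemma window (ε : ℝ) (hε : 0 < ε) (L d0 : ℕ) : ∀ᶠ N : ℕ in atTop, ∃ y, d0 ≤ y ∧ ∀ d, y ≤ d → d ≤ y + L →
    4 * (d + 2) ^ 2 ≤ 9 * N ∧ (N : ℝ) - (N : ℝ) ^ ((1 : ℝ) / 2 + ε) ≤ 4 / 9 * (d : ℝ) ^ 2 := by
  have t1 : Tendsto (fun N : ℕ => (N : ℝ) ^ ε) atTop atTop :=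
    (tendsto_rpow_atTop hε).comp tendsto_natCast_atTop_atTop
  filter_upwards [t1.eventually_ge_atTop (4 / 3 * (L + 3)), eventually_ge_atTop ((L + d0 + 4) ^ 2), eventually_ge_atTop 1] with N h1 h2 h0
  have hN0 : (0 : ℝ) < N := by exact_mod_cast h0
  set s := √(N : ℝ) with hs
  have hs2 : s ^ 2 = N := Real.sq_sqrt hN0.le
  have hs0 : 0 ≤ s := Real.sqrt_nonneg _
  have hsL : (L : ℝ) + d0 + 4 ≤ s := by
    apply Real.le_sqrt_of_sq_le
    exact_mod_cast h2
  set z := ⌊3 / 2 * s⌋₊ with hz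
  have z1 : (z : ℝ) ≤ 3 / 2 * s := Nat.floor_le (by positivity)
  have z2 : 3 / 2 * s < z + 1 := Nat.lt_floor_add_one _
  have z3 : L + d0 + 3 ≤ z := by
    have : ((L + d0 + 3 : ℕ) : ℝ) < (z : ℝ) + 1 := by push_cast; linarith
    have : L + d0 + 3 < z + 1 := by exact_mod_cast this
    omega
  refine ⟨z - L - 2, by omega, fun d hd1 hd2 => ⟨?_, ?_⟩⟩
  · have a : d + 2 ≤ z := by omega
    have a' : (d : ℝ) + 2 ≤ z := by exact_mod_cast a
    have : 4 * ((d : ℝ) + 2) ^ 2 ≤ 9 * N := by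
      rw [← hs2]
      have : 0 ≤ (d : ℝ) + 2 := by positivity
      nlinarith
    exact_mod_cast this
  · have a : z ≤ d + L + 2 := by omega
    have a' : (z : ℝ) ≤ d + L + 2 := by exact_mod_cast a
    have e : (N : ℝ) ^ ((1 : ℝ) / 2 + ε) = s * (N : ℝ) ^ ε := by
      rw [Real.rpow_add hN0, hs, Real.sqrt_eq_rpow]
    have b1 : s * (4 / 3 * (L + 3)) ≤ s * (N : ℝ) ^ ε := by gcongr
    rw [e, ← hs2]
    rw [← hs2] at b1
    have b2 : 3 / 2 * s - (L + 3) ≤ d := by linarith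
    have b3 : 0 ≤ 3 / 2 * s - (L + 3) := by
      have : (0 : ℝ) ≤ d0 := by positivity
      linarith
    have b4 : (3 / 2 * s - (L + 3)) ^ 2 ≤ (d : ℝ) ^ 2 := by gcongr
    nlinarith [sq_nonneg ((L : ℝ) + 3)]

lemma thick_ip {ι : Type} [Fintype ι] (V : ℕ → Prop) (hV : ∀ L : ℕ, ∃ y, ∀ d, y ≤ d → d ≤ y + L → V d)
    (D : ℕ) (hD : 1 ≤ D) : ∃ s : ι → ℕ, (∀ i, D ∣ s i) ∧ ∀ S : Finset ι, S.Nonempty → V (∑ j ∈ S, s j) := by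
  classical
  have : ∀ T : Finset ι, ∃ s : ι → ℕ, (∀ i, D ∣ s i) ∧ ∀ S : Finset ι, S ⊆ T → S.Nonempty → V (∑ j ∈ S, s j) := by
    intro T
    induction T using Finset.induction_on with
    | empty => exact ⟨fun _ => 0, fun _ => dvd_zero _, fun S hS hne => absurd (Finset.subset_empty.1 hS) hne.ne_empty⟩
    | insert a T ha ih =>
      obtain ⟨s, hs, hsV⟩ := ih
      obtain ⟨y, hy⟩ := hV (D + ∑ j ∈ T, s j)
      set v := D * (y / D + 1) with hv
      have v1 : y ≤ v := by
        have := Nat.div_add_mod y D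
        have := Nat.mod_lt y hD
        rw [hv, mul_add]; omega
      have v2 : v ≤ y + D := by
        have := Nat.div_add_mod y D
        rw [hv, mul_add]; omega
      refine ⟨Function.update s a v, fun i => ?_, fun S hS hne => ?_⟩
      · by_cases h : i = a
        · subst h; simp [hv]
        · rw [Function.update_of_ne h]; exact hs i
      · by_cases h : a ∈ S
        · rw [← Finset.add_sum_erase S _ h, Function.update_self]
          have e : ∑ j ∈ S.erase a, Function.update s a v j = ∑ j ∈ S.erase a, s j :=
            Finset.sum_congr rfl fun j hj => Function.update_of_ne (Finset.ne_of_mem_erase hj) _ _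
          rw [e]
          have hsub : S.erase a ⊆ T := by
            intro j hj
            rcases Finset.mem_insert.1 (hS (Finset.mem_of_mem_erase hj)) with h | h
            · exact absurd h (Finset.ne_of_mem_erase hj)
            · exact h
          have := Finset.sum_le_sum_of_subset (f := s) hsub
          exact hy _ (by omega) (by omega)
        · have e : ∑ j ∈ S, Function.update s a v j = ∑ j ∈ S, s j :=
            Finset.sum_congr rfl fun j hj => Function.update_of_ne (ne_of_mem_of_not_mem hj h) _ _
          rw [e]
          refine hsV S (fun j hj => ?_) hne
          rcases Finset.mem_insert.1 (hS hj) with h' | h'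
          · exact absurd (h' ▸ hj) h
          · exact h'
  obtain ⟨s, h1, h2⟩ := this Finset.univ
  exact ⟨s, h1, fun S hS => h2 S (Finset.subset_univ S) hS⟩

theorem final (E : Set ℕ) (δ : ℝ) (hδ : 0 < δ) (M N : ℕ → ℕ) (h1 : ∀ j, 1 ≤ M j ∧ M j ≤ N j)
    (h2 : Tendsto (fun j => N j - M j) atTop atTop)
    (h3 : ∀ j, δ * ((N j : ℝ) - (M j : ℝ)) ≤ (Nat.card ↥(E ∩ Set.Icc (M j) (N j)) : ℝ))
    (k : ℕ) (ε : ℝ) (hε : 0 < ε) :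
    ∀ᶠ N : ℕ in atTop, ∃ n a : ℕ, 1 ≤ a ∧
      (N : ℝ) - (N : ℝ) ^ ((1 : ℝ) / 2 + ε) ≤ (n : ℝ) ∧ n ≤ N ∧
      a ∈ E ∧ ∀ i : ℕ, i ≤ k → a + ⌊((n + i : ℕ) : ℝ) ^ ((3 : ℝ) / 2)⌋₊ ∈ E := by
  obtain ⟨m, m1, m2, m3, m4⟩ := mean_exists E δ hδ M N h1 h2 h3
  have hm : IsMean m := ⟨m1, m2, m3⟩
  obtain ⟨ι, hι, Q, R, hmain⟩ := hm.main _ (δ / 2) (half_pos hδ) m4 k (k + 2)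
  obtain ⟨u0, hu0⟩ := arith_all k (k + 2 + Q) R
  by_contra hcon
  rw [Filter.not_eventually] at hcon
  set w := (k + 2 + Q).factorial with hw
  have hwpos : 1 ≤ w := Nat.factorial_pos _
  set D := 9 * w ^ 2 with hD
  have hDpos : 1 ≤ D := by rw [hD]; nlinarith
  set d0 := 9 * (k + 2 + Q) ^ 2 * (u0 + R) with hd0
  obtain ⟨s, hs1, hs2⟩ := thick_ip (ι := ι) (fun d => d0 ≤ d ∧ ∃ N : ℕ, (¬ ∃ n a : ℕ, 1 ≤ a ∧
      (N : ℝ) - (N : ℝ) ^ ((1 : ℝ) / 2 + ε) ≤ (n : ℝ) ∧ n ≤ N ∧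
      a ∈ E ∧ ∀ i : ℕ, i ≤ k → a + ⌊((n + i : ℕ) : ℝ) ^ ((3 : ℝ) / 2)⌋₊ ∈ E) ∧
      4 * (d + 2) ^ 2 ≤ 9 * N ∧ (N : ℝ) - (N : ℝ) ^ ((1 : ℝ) / 2 + ε) ≤ 4 / 9 * (d : ℝ) ^ 2) (by
    intro L
    obtain ⟨N, hN1, y, hy, hN2⟩ := (hcon.and_eventually (window ε hε L d0)).exists
    exact ⟨y, fun d hd1 hd2 => ⟨hy.trans hd1, N, hN1, hN2 d hd1 hd2⟩⟩) D hDpos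
  obtain ⟨S, hS, hSm⟩ := hmain s
  obtain ⟨d, hd⟩ : ∃ d, d = ∑ j ∈ S, s j := ⟨_, rfl⟩
  obtain ⟨hdd, N, hbad, hN1, hN2⟩ := hs2 S hS
  rw [← hd] at hdd hN1 hN2
  have hDd : D ∣ d := hd ▸ Finset.dvd_sum fun j _ => hs1 j
  obtain ⟨q, r, n, hq1, hq2, hr, hnE, hni⟩ := hSm d hd (fun t ht1 ht2 => by
    have : t ∣ w := Nat.dvd_factorial ht1 (by omega)
    refine (this.trans ?_).trans hDd
    exact Dvd.intro_left (9 * w) (by rw [hD]; ring))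
    (fun q => 216 * q ^ 6 * (d / (9 * q ^ 2)) ^ 3 + 72 * q ^ 3 * (d / (9 * q ^ 2)) ^ 2 + 4 * (d / (9 * q ^ 2)) + d)
  have hqd : 9 * q ^ 2 ∣ d := by
    refine dvd_trans ?_ hDd
    exact mul_dvd_mul_left 9 (pow_dvd_pow_of_dvd (Nat.dvd_factorial (by omega) (by omega)) 2)
  obtain ⟨u, hu⟩ := hqd
  have hdu : d / (9 * q ^ 2) = u := by
    rw [hu]; exact Nat.mul_div_cancel_left u (by have : 0 < q := by omega
                                                 positivity)
  have hub : u0 + R ≤ u := by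
    by_contra hlt
    push Not at hlt
    have : 9 * q ^ 2 * u < 9 * (k + 2 + Q) ^ 2 * (u0 + R) := by
      have a1 : q ^ 2 ≤ (k + 2 + Q) ^ 2 := Nat.pow_le_pow_left (by omega) 2
      calc 9 * q ^ 2 * u ≤ 9 * (k + 2 + Q) ^ 2 * u := by gcongr
        _ < _ := by
          have : 0 < 9 * (k + 2 + Q) ^ 2 := by positivity
          exact Nat.mul_lt_mul_of_pos_left hlt this
    omega
  simp only [hdu] at hnE
  apply hbad
  set X := 216 * q ^ 6 * u ^ 3 + 72 * q ^ 3 * u ^ 2 + 4 * u with hX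
  set b := n - ((X + d + (d * q + 1) * r : ℕ) : ℤ) with hb
  obtain ⟨hb1, hb2⟩ := hnE
  refine ⟨36 * q ^ 4 * u ^ 2 + 8 * q * u + 1 + q * r, b.toNat, by omega, ?_, ?_, hb2, fun i hi => ?_⟩
  · refine hN2.trans ?_
    rw [hu]
    push_cast
    have e : (4 : ℝ) / 9 * (9 * q ^ 2 * u) ^ 2 = 36 * q ^ 4 * u ^ 2 := by ring
    rw [e]
    have : (0 : ℝ) ≤ 8 * q * u + 1 + q * r := by positivity
    linarith
  · have e : 4 * (d + 2) ^ 2 = 9 * (36 * q ^ 4 * u ^ 2) + 16 * (9 * q ^ 2 * u) + 16 := by rw [hu]; ring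
    have a1 : q * r ≤ q * u := Nat.mul_le_mul_left q (by omega)
    have a2 : q * u ≤ q ^ 2 * u := by
      have : q ≤ q ^ 2 := by nlinarith
      gcongr
    rw [e] at hN1
    nlinarith
  · rw [hu0 u (by omega) q (by omega) hq2 r hr i hi]
    obtain ⟨h5, h6⟩ := hni i hi
    have : b.toNat + (X + (q * r + i + 1) * (9 * q ^ 2 * u) + r) = (n + ((i * d : ℕ) : ℤ)).toNat := by
      zify
      rw [Int.toNat_of_nonneg (by omega), Int.toNat_of_nonneg (by omega), hb, hu]
      push_cast
      ring
    rw [this]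
    exact h6

end S14
end

/-- combinatorial corollary for `f(n) = n^{3/2}`: configurations
`{a, a+⌊n^{3/2}⌋, …, a+⌊(n+k)^{3/2}⌋} ⊆ E` with `n ∈ [N − N^{1/2+ε}, N]` for all large `N`. -/
theorem stmt14 (E : Set ℕ) (hE : posUBD E)
    (k : ℕ) (hk : 1 ≤ k) (ε : ℝ) (hε : 0 < ε) :
    ∀ᶠ N : ℕ in atTop, ∃ n a : ℕ, 1 ≤ a ∧
      (N : ℝ) - (N : ℝ) ^ ((1 : ℝ) / 2 + ε) ≤ (n : ℝ) ∧ n ≤ N ∧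
      a ∈ E ∧ ∀ i : ℕ, i ≤ k → a + ⌊((n + i : ℕ) : ℝ) ^ ((3 : ℝ) / 2)⌋₊ ∈ E := by
  obtain ⟨δ, hδ, M, N, h1, h2, h3⟩ := hE
  exact S14.final E δ hδ M N h1 h2 h3 k ε hε
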